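/- arXiv:1304.7216 — 4 statements merged into one kernel-verified Lean document; each statement's English description precedes it below -/
import Mathlib

section
/- Let Δ ≥ 2 and let G be an infinite, connected, Δ-regular, vertex-transitive simple graph. Then for every vertex v and every n ≥ 0, the number of forward-extendable 2n-step SAWs from v satisfies σ^F_{2n}(v) ≥ (Δ−1)^n. -/
open Filter

/-- The number of forward-extendable `n`-step self-avoiding walks in `G` starting at `v`:
`n`-step self-avoiding walks from `v` whose vertex sequence is an initial segment of some
infinite self-avoiding walk from `v`. -/
noncomputable def fwdSawCount {V : Type*} (G : SimpleGraph V) (v : V) (n : ℕ) : ℕ :=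
  Nat.card {p : Σ w : V, G.Walk v w // p.2.IsPath ∧ p.2.length = n ∧
    ∃ f : ℕ → V, Function.Injective f ∧ (∀ i : ℕ, G.Adj (f i) (f (i + 1))) ∧
      ∀ i : ℕ, i ≤ n → f i = p.2.getVert i}

/-!
An edge atom is a finite nonempty vertex set whose edge boundary is smallest, and which has
smallest cardinality among those. By submodularity distinct edge atoms are disjoint, so in a
vertex-transitive graph every vertex of an atom has the same number `e ≥ 1` of neighbours outside
it; the boundary then has `e * |A|` edges, which is at least the degree `Δ` since a vertex has at
most `|A| - 1` neighbours inside the atom. Hence every finite nonempty set has at least `Δ`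
boundary edges.

Now grow a self-avoiding walk. With `F` the vertices already left and `u` the current vertex,
let `Φ` be the number of edges between `F` and the component of `u` in `G - F`, and let `c` be the
number of neighbours of `u` from which infinity can be reached avoiding `F ∪ {u}`. Removing `u`
cuts off a finite region; its boundary consists of at most `c` edges at `u` and of edges to `F`,
which no longer count in the next `Φ`. So `Φ' + Δ ≤ Φ + 2 * c`, and along a walk the average number
of choices is about `Δ / 2`. After the first step there are at most `Δ - 1` choices each time, and
`(1 + y) ^ k ≤ (1 + k) ^ y` for `k ≤ y = Δ - 2` (the logarithm is concave) turns this average into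
a bound on the product: `2 * n` steps have the effect of `n` steps with `Δ - 1` choices each.
-/

namespace ForwardSaw

theorem ncard_mul_le_ncard_of_le_ncard_fiber {α β : Type*} {s : Set α} {t : Set β} {k : ℕ}
    (hs : s.Finite) (f : α → β) (hf : ∀ b ∈ t, k ≤ {a ∈ s | f a = b}.ncard) :
    t.ncard * k ≤ s.ncard := by
  rcases t.finite_or_infinite with ht | ht
  · have fibers_disjoint : t.PairwiseDisjoint fun b => {a ∈ s | f a = b} :=
      fun b _ c _ hbc => Set.disjoint_left.2 fun _ hab hac => hbc (hab.2.symm.trans hac.2)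
    calc t.ncard * k ≤ ∑ b ∈ ht.toFinset, {a ∈ s | f a = b}.ncard := by
          rw [Set.ncard_eq_toFinset_card t ht]
          exact Finset.card_nsmul_le_sum _ _ _ fun b hb => hf b (ht.mem_toFinset.1 hb)
      _ = ∑ᶠ b ∈ t, {a ∈ s | f a = b}.ncard := (finsum_mem_eq_finite_toFinset_sum _ ht).symm
      _ = (⋃ b ∈ t, {a ∈ s | f a = b}).ncard :=
          (ht.ncard_biUnion (fun _ _ => hs.sep _) fibers_disjoint).symm
      _ ≤ s.ncard := Set.ncard_le_ncard (Set.iUnion₂_subset fun _ _ => Set.sep_subset _ _) hs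
  · simp [ht.ncard]

theorem one_add_pow_le_one_add_pow {x y : ℕ} (hxy : x ≤ y) : (1 + y) ^ x ≤ (1 + x) ^ y := by
  rcases Nat.eq_zero_or_pos y with rfl | hy
  · simp [Nat.le_zero.1 hxy]
  have hy' : (0 : ℝ) < y := by exact_mod_cast hy
  have bernoulli : (1 + y : ℝ) ^ (x / y : ℝ) ≤ 1 + x := by
    have hxy' : (x / y : ℝ) ≤ 1 := (div_le_one hy').2 (by exact_mod_cast hxy)
    simpa only [div_mul_cancel₀ _ hy'.ne'] using
      rpow_one_add_le_one_add_mul_self (s := (y : ℝ)) (p := x / y) (by linarith)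
        (by positivity) hxy'
  have : (1 + y : ℝ) ^ x ≤ (1 + x : ℝ) ^ y :=
    calc (1 + y : ℝ) ^ x = ((1 + y : ℝ) ^ (x / y : ℝ)) ^ y := by
          rw [← Real.rpow_mul_natCast (by positivity), div_mul_cancel₀ _ hy'.ne',
            Real.rpow_natCast]
      _ ≤ (1 + x : ℝ) ^ y := pow_le_pow_left₀ (by positivity) bernoulli y
  exact_mod_cast this

section EdgeCounts

variable {V : Type*} {G : SimpleGraph V} {S T : Set V}

/-- The edges from `S` to `T` as ordered pairs, the `Set` analogue of `SimpleGraph.interedges`; an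
edge inside `S ∩ T` occurs in both orientations. -/
def edgesBetween (G : SimpleGraph V) (S T : Set V) : Set (V × V) :=
  {e | e.1 ∈ S ∧ e.2 ∈ T ∧ G.Adj e.1 e.2}

/-- The edge boundary of `S`: the edges leaving `S`, oriented outwards. -/
def edgeBoundary (G : SimpleGraph V) (S : Set V) : Set (V × V) :=
  edgesBetween G S Sᶜ

theorem edgesBetween_mono {S' T' : Set V} (hS : S ⊆ S') (hT : T ⊆ T') :
    edgesBetween G S T ⊆ edgesBetween G S' T' :=
  fun _ he => ⟨hS he.1, hT he.2.1, he.2.2⟩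

theorem edgesBetween_insert_left (u : V) (S T : Set V) :
    edgesBetween G (insert u S) T = edgesBetween G {u} T ∪ edgesBetween G S T := by
  ext e
  simp only [edgesBetween, Set.mem_insert_iff, Set.mem_union, Set.mem_ofPred_eq,
    Set.mem_singleton_iff, or_and_right]

theorem edgesBetween_disjoint_right {T' : Set V} (hT : Disjoint T T') (S : Set V) :
    Disjoint (edgesBetween G S T) (edgesBetween G S T') :=
  Set.disjoint_left.2 fun _ he he' => Set.disjoint_left.1 hT he.2.1 he'.2.1

theorem ncard_edgesBetween_comm (G : SimpleGraph V) (S T : Set V) :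
    (edgesBetween G S T).ncard = (edgesBetween G T S).ncard := by
  have swap_image : Prod.swap '' edgesBetween G S T = edgesBetween G T S := by
    ext ⟨x, y⟩
    simp only [edgesBetween, Set.image_swap_eq_preimage_swap, Set.preimage_ofPred_eq,
      Set.mem_ofPred_eq, Prod.fst_swap, Prod.snd_swap, G.adj_comm y x]
    tauto
  rw [← swap_image, Set.ncard_image_of_injective _ Prod.swap_injective]

theorem ncard_edgesBetween_singleton_left (G : SimpleGraph V) (u : V) (T : Set V) :
    (edgesBetween G {u} T).ncard = (G.neighborSet u ∩ T).ncard := by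
  have prodMk_image : Prod.mk u '' (G.neighborSet u ∩ T) = edgesBetween G {u} T := by
    ext ⟨x, y⟩
    simp only [edgesBetween, Set.mem_image, Set.mem_inter_iff, SimpleGraph.mem_neighborSet,
      Prod.mk.injEq, Set.mem_singleton_iff, Set.mem_ofPred_eq]
    grind
  rw [← prodMk_image, Set.ncard_image_of_injective _ (Prod.mk_right_injective u)]

theorem edgeBoundary_image (γ : G ≃g G) (S : Set V) :
    edgeBoundary G (γ '' S) = Prod.map γ γ '' edgeBoundary G S := by
  ext ⟨x, y⟩
  obtain ⟨a, rfl⟩ := γ.surjective x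
  obtain ⟨b, rfl⟩ := γ.surjective y
  rw [← Prod.map_apply, (γ.injective.prodMap γ.injective).mem_set_image]
  simp only [edgeBoundary, edgesBetween, Set.mem_ofPred_eq, Set.mem_compl_iff, Prod.map_apply,
    γ.injective.mem_set_image, γ.map_adj_iff]

theorem edgeBoundary_nonempty [Infinite V] (hconn : G.Connected) (hS : S.Nonempty)
    (hfin : S.Finite) : (edgeBoundary G S).Nonempty := by
  obtain ⟨a, ha⟩ := hS
  obtain ⟨b, hb⟩ := hfin.exists_notMem
  obtain ⟨p⟩ := hconn.preconnected a b
  obtain ⟨d, -, hd, hd'⟩ := p.exists_boundary_dart S ha hb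
  exact ⟨d.toProd, hd, hd', d.adj⟩

variable [∀ v, Finite (G.neighborSet v)]

theorem finite_edgesBetween (hS : S.Finite) (T : Set V) : (edgesBetween G S T).Finite := by
  refine (hS.prod (hS.biUnion fun x _ => Set.toFinite (G.neighborSet x))).subset fun e he => ?_
  exact ⟨he.1, Set.mem_biUnion he.1 he.2.2⟩

theorem ncard_edgeBoundary_inter_add_union_le (hS : S.Finite) (hT : T.Finite) :
    (edgeBoundary G (S ∩ T)).ncard + (edgeBoundary G (S ∪ T)).ncard ≤
      (edgeBoundary G S).ncard + (edgeBoundary G T).ncard := by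
  have fin_boundary {R : Set V} (hR : R.Finite) : (edgeBoundary G R).Finite :=
    finite_edgesBetween hR _
  have union_subset : edgeBoundary G (S ∩ T) ∪ edgeBoundary G (S ∪ T) ⊆
      edgeBoundary G S ∪ edgeBoundary G T := by
    intro e he
    simp only [edgeBoundary, edgesBetween, Set.mem_union, Set.mem_inter_iff, Set.mem_compl_iff,
      Set.mem_ofPred_eq] at he ⊢
    tauto
  have inter_subset : edgeBoundary G (S ∩ T) ∩ edgeBoundary G (S ∪ T) ⊆
      edgeBoundary G S ∩ edgeBoundary G T := by
    intro e he
    simp only [edgeBoundary, edgesBetween, Set.mem_union, Set.mem_inter_iff, Set.mem_compl_iff,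
      Set.mem_ofPred_eq] at he ⊢
    tauto
  rw [← Set.ncard_union_add_ncard_inter _ _ (fin_boundary (hS.inter_of_left T))
      (fin_boundary (hS.union hT)),
    ← Set.ncard_union_add_ncard_inter _ _ (fin_boundary hS) (fin_boundary hT)]
  exact add_le_add
    (Set.ncard_le_ncard union_subset ((fin_boundary hS).union (fin_boundary hT)))
    (Set.ncard_le_ncard inter_subset ((fin_boundary hS).inter_of_left _))

end EdgeCounts

section EdgeAtoms

variable {V : Type*} {G : SimpleGraph V} {A B : Set V}

/-- An edge atom (in the sense of Mader): a finite nonempty set with the smallest edge boundary and,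
among those, the smallest cardinality. Both minimalities are encoded as one lexicographic one. -/
def IsEdgeAtom (G : SimpleGraph V) : Set V → Prop :=
  MinimalFor (fun S => S.Nonempty ∧ S.Finite) fun S => toLex ((edgeBoundary G S).ncard, S.ncard)

theorem exists_isEdgeAtom [Nonempty V] (G : SimpleGraph V) : ∃ A, IsEdgeAtom G A :=
  exists_minimalFor_of_wellFoundedLT _ _
    ⟨{Classical.arbitrary V}, Set.singleton_nonempty _, Set.finite_singleton _⟩

namespace IsEdgeAtom

theorem nonempty (hA : IsEdgeAtom G A) : A.Nonempty := hA.prop.1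

theorem finite (hA : IsEdgeAtom G A) : A.Finite := hA.prop.2

theorem ncard_edgeBoundary_lt_or_ncard_le (hA : IsEdgeAtom G A) (hB : B.Nonempty)
    (hfin : B.Finite) :
    (edgeBoundary G A).ncard < (edgeBoundary G B).ncard ∨
      (edgeBoundary G A).ncard = (edgeBoundary G B).ncard ∧ A.ncard ≤ B.ncard :=
  Prod.Lex.toLex_le_toLex.1 ((le_total _ _).elim id (hA.le_of_le ⟨hB, hfin⟩))

theorem image (hA : IsEdgeAtom G A) (γ : G ≃g G) : IsEdgeAtom G (γ '' A) := by
  refine ⟨⟨hA.nonempty.image γ, hA.finite.image γ⟩, fun B hB _ => ?_⟩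
  beta_reduce
  rw [edgeBoundary_image, Set.ncard_image_of_injective _ (γ.injective.prodMap γ.injective),
    Set.ncard_image_of_injective _ γ.injective]
  exact Prod.Lex.toLex_le_toLex.2 (hA.ncard_edgeBoundary_lt_or_ncard_le hB.1 hB.2)

theorem eq_of_inter_nonempty [∀ v, Finite (G.neighborSet v)] (hA : IsEdgeAtom G A)
    (hB : IsEdgeAtom G B) (hAB : (A ∩ B).Nonempty) : A = B := by
  have submodular := ncard_edgeBoundary_inter_add_union_le (G := G) hA.finite hB.finite
  have le_inter := hA.ncard_edgeBoundary_lt_or_ncard_le hAB (hA.finite.inter_of_left B)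
  have le_union := hA.ncard_edgeBoundary_lt_or_ncard_le (hA.nonempty.inl (t := B))
    (hA.finite.union hB.finite)
  have hle := hA.ncard_edgeBoundary_lt_or_ncard_le hB.nonempty hB.finite
  have hge := hB.ncard_edgeBoundary_lt_or_ncard_le hA.nonempty hA.finite
  have inter_eq : A ∩ B = A :=
    Set.eq_of_subset_of_ncard_le Set.inter_subset_left (by omega) hA.finite
  exact Set.eq_of_subset_of_ncard_le (Set.inter_eq_left.1 inter_eq) (by omega) hB.finite

theorem ncard_neighborSet_sdiff_eq [∀ v, Finite (G.neighborSet v)] (hA : IsEdgeAtom G A)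
    (htrans : ∀ v w : V, ∃ γ : G ≃g G, γ v = w) {x y : V} (hx : x ∈ A) (hy : y ∈ A) :
    (G.neighborSet x \ A).ncard = (G.neighborSet y \ A).ncard := by
  obtain ⟨γ, rfl⟩ := htrans x y
  have image_eq : γ '' A = A :=
    (hA.image γ).eq_of_inter_nonempty hA ⟨γ x, Set.mem_image_of_mem γ hx, hy⟩
  have image_sdiff : γ '' (G.neighborSet x \ A) = G.neighborSet (γ x) \ A := by
    rw [Set.image_sdiff γ.injective, image_eq, γ.image_neighborSet]
  rw [← image_sdiff, Set.ncard_image_of_injective _ γ.injective]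

end IsEdgeAtom

theorem le_ncard_edgeBoundary_of_vertexTransitive [Infinite V]
    [∀ v, Finite (G.neighborSet v)] {Δ : ℕ} (hconn : G.Connected)
    (hdeg : ∀ v, Δ ≤ (G.neighborSet v).ncard)
    (htrans : ∀ v w : V, ∃ γ : G ≃g G, γ v = w) {S : Set V} (hS : S.Nonempty)
    (hfin : S.Finite) : Δ ≤ (edgeBoundary G S).ncard := by
  obtain ⟨A, hA⟩ := exists_isEdgeAtom G
  have boundary_finite : (edgeBoundary G A).Finite := finite_edgesBetween hA.finite _
  obtain ⟨⟨a, b⟩, ha, hb, hab⟩ := edgeBoundary_nonempty hconn hA.nonempty hA.finite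
  set e := (G.neighborSet a \ A).ncard
  have e_pos : 0 < e := (Set.ncard_pos (Set.toFinite _)).2 ⟨b, hab, hb⟩
  have card_mul_le : A.ncard * e ≤ (edgeBoundary G A).ncard := by
    refine ncard_mul_le_ncard_of_le_ncard_fiber boundary_finite Prod.fst fun x hx => ?_
    have fiber_eq : {p ∈ edgeBoundary G A | p.1 = x} = edgesBetween G {x} Aᶜ := by
      ext p
      simp only [edgeBoundary, edgesBetween, Set.mem_ofPred_eq, Set.mem_singleton_iff]
      grind
    rw [fiber_eq, ncard_edgesBetween_singleton_left, ← Set.sdiff_eq,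
      hA.ncard_neighborSet_sdiff_eq htrans hx ha]
  have inner_lt : (G.neighborSet a ∩ A).ncard < A.ncard :=
    Set.ncard_lt_ncard ⟨Set.inter_subset_right, fun h => (h ha).1.ne rfl⟩ hA.finite
  calc Δ ≤ (G.neighborSet a).ncard := hdeg a
    _ = (G.neighborSet a ∩ A).ncard + e :=
        (Set.ncard_inter_add_ncard_sdiff_eq_ncard _ _ (Set.toFinite _)).symm
    _ ≤ A.ncard * e := by nlinarith
    _ ≤ (edgeBoundary G A).ncard := card_mul_le
    _ ≤ (edgeBoundary G S).ncard := by have := hA.ncard_edgeBoundary_lt_or_ncard_le hS hfin; omega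

end EdgeAtoms

section Components

variable {V : Type*} {G : SimpleGraph V} {F F' S : Set V} {u w x y : V}

/-- The connected component of `u` in `G - F`; it is empty if `u ∈ F`. -/
def avoidingComponent (G : SimpleGraph V) (F : Set V) (u : V) : Set V :=
  {x | ∃ p : G.Walk u x, ∀ y ∈ p.support, y ∉ F}

theorem self_mem_avoidingComponent (hu : u ∉ F) : u ∈ avoidingComponent G F u :=
  ⟨.nil, by simpa using hu⟩

theorem notMem_of_mem_avoidingComponent (hx : x ∈ avoidingComponent G F u) : x ∉ F :=
  let ⟨p, hp⟩ := hx
  hp x p.end_mem_support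

theorem avoidingComponent_eq_empty (hu : u ∈ F) : avoidingComponent G F u = ∅ :=
  Set.eq_empty_of_forall_notMem fun _ ⟨p, hp⟩ => hp u p.start_mem_support hu

theorem mem_avoidingComponent_symm (hx : x ∈ avoidingComponent G F u) :
    u ∈ avoidingComponent G F x :=
  let ⟨p, hp⟩ := hx
  ⟨p.reverse, by simpa using hp⟩

theorem avoidingComponent_subset_of_mem (hx : x ∈ avoidingComponent G F u) :
    avoidingComponent G F x ⊆ avoidingComponent G F u := by
  rintro y ⟨q, hq⟩
  obtain ⟨p, hp⟩ := hx
  exact ⟨p.append q, fun z hz => ((p.mem_support_append_iff q).1 hz).elim (hp z) (hq z)⟩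

theorem avoidingComponent_eq_of_mem (hx : x ∈ avoidingComponent G F u) :
    avoidingComponent G F x = avoidingComponent G F u :=
  (avoidingComponent_subset_of_mem hx).antisymm
    (avoidingComponent_subset_of_mem (mem_avoidingComponent_symm hx))

theorem mem_avoidingComponent_of_adj (hx : x ∈ avoidingComponent G F u) (hxy : G.Adj x y)
    (hy : y ∉ F) : y ∈ avoidingComponent G F u :=
  avoidingComponent_subset_of_mem hx
    ⟨hxy.toWalk, by simpa using ⟨notMem_of_mem_avoidingComponent hx, hy⟩⟩

theorem avoidingComponent_subset_of_closed (hu : u ∈ S)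
    (hS : ∀ x ∈ S, ∀ y ∉ F, G.Adj x y → y ∈ S) : avoidingComponent G F u ⊆ S := by
  rintro x ⟨p, hp⟩
  induction p with
  | nil => exact hu
  | cons h p ih =>
    rw [SimpleGraph.Walk.support_cons, List.forall_mem_cons] at hp
    exact ih (hS _ hu _ (hp.2 _ p.start_mem_support) h) hp.2

theorem avoidingComponent_anti (hF : F ⊆ F') :
    avoidingComponent G F' u ⊆ avoidingComponent G F u :=
  fun _ ⟨p, hp⟩ => ⟨p, fun y hy hyF => hp y hy (hF hyF)⟩

theorem infinite_avoidingComponent_empty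
    (hbd : ∀ S : Set V, S.Nonempty → S.Finite → (edgeBoundary G S).Nonempty) (v : V) :
    (avoidingComponent G ∅ v).Infinite := by
  intro hfin
  obtain ⟨e, he, he', hadj⟩ := hbd _ ⟨v, self_mem_avoidingComponent (Set.notMem_empty v)⟩ hfin
  exact he' (mem_avoidingComponent_of_adj he hadj (Set.notMem_empty _))

/-- The possible next vertices of a self-avoiding walk standing at `u` after visiting `F`, if it is
to be continued to infinity. -/
def escapes (G : SimpleGraph V) (F : Set V) (u : V) : Set V :=
  {w ∈ G.neighborSet u | (avoidingComponent G (insert u F) w).Infinite}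

/-- The part of the component of `u` in `G - F` that is separated from infinity by removing `u`,
together with `u` itself, whose component in `G - (F ∪ {u})` is empty. -/
def trappedRegion (G : SimpleGraph V) (F : Set V) (u : V) : Set V :=
  {x ∈ avoidingComponent G F u | (avoidingComponent G (insert u F) x).Finite}

theorem self_mem_trappedRegion (hu : u ∉ F) : u ∈ trappedRegion G F u :=
  ⟨self_mem_avoidingComponent hu, by
    simp [avoidingComponent_eq_empty (Set.mem_insert u F)]⟩

theorem exists_adj_mem_avoidingComponent_insert (hx : x ∈ avoidingComponent G F u)
    (hxu : x ≠ u) : ∃ w, G.Adj u w ∧ x ∈ avoidingComponent G (insert u F) w := by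
  suffices avoidingComponent G F u ⊆
      {x | x ≠ u → ∃ w, G.Adj u w ∧ x ∈ avoidingComponent G (insert u F) w} from this hx hxu
  refine avoidingComponent_subset_of_closed (fun h => absurd rfl h) fun a ha b hb hab hbu => ?_
  have hb' : b ∉ insert u F := by simp [hbu, hb]
  rcases eq_or_ne a u with rfl | hau
  · exact ⟨b, hab, self_mem_avoidingComponent hb'⟩
  · obtain ⟨w, huw, haw⟩ := ha hau
    exact ⟨w, huw, mem_avoidingComponent_of_adj haw hab hb'⟩

theorem notMem_of_infinite_avoidingComponent (hu : (avoidingComponent G F u).Infinite) :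
    u ∉ F :=
  fun h => hu.nonempty.ne_empty (avoidingComponent_eq_empty h)

theorem avoidingComponent_insert_subset (hu : u ∉ F) (hw : w ∈ escapes G F u) :
    avoidingComponent G (insert u F) w ⊆ avoidingComponent G F u := by
  have hwF : w ∉ F := fun h =>
    notMem_of_infinite_avoidingComponent hw.2 (Set.mem_insert_of_mem u h)
  exact (avoidingComponent_anti (Set.subset_insert u F)).trans (avoidingComponent_subset_of_mem
    (mem_avoidingComponent_of_adj (self_mem_avoidingComponent hu) hw.1 hwF))

theorem edgeBoundary_trappedRegion_subset (F : Set V) (u : V) :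
    edgeBoundary G (trappedRegion G F u) ⊆
      edgesBetween G (trappedRegion G F u) F ∪ edgesBetween G {u} (escapes G F u) := by
  rintro ⟨x, y⟩ ⟨hx, hy, hxy⟩
  by_cases hyF : y ∈ F
  · exact Or.inl ⟨hx, hyF, hxy⟩
  have y_infinite : (avoidingComponent G (insert u F) y).Infinite :=
    fun hfin => hy ⟨mem_avoidingComponent_of_adj hx.1 hxy hyF, hfin⟩
  have x_eq : x = u := by
    by_contra hxu
    have hxF : x ∉ insert u F := by simp [hxu, notMem_of_mem_avoidingComponent hx.1]
    have y_mem : y ∈ avoidingComponent G (insert u F) x :=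
      mem_avoidingComponent_of_adj (self_mem_avoidingComponent hxF) hxy
        (notMem_of_infinite_avoidingComponent y_infinite)
    exact y_infinite (avoidingComponent_eq_of_mem y_mem ▸ hx.2)
  exact Or.inr ⟨x_eq, ⟨x_eq ▸ hxy, y_infinite⟩, hxy⟩

theorem disjoint_avoidingComponent_insert_trappedRegion (hw : w ∈ escapes G F u) :
    Disjoint (avoidingComponent G (insert u F) w) (trappedRegion G F u) :=
  Set.disjoint_left.2 fun _ hx hx' => hw.2 (avoidingComponent_eq_of_mem hx ▸ hx'.2)

variable [∀ v, Finite (G.neighborSet v)]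

theorem finite_escapes (F : Set V) (u : V) : (escapes G F u).Finite :=
  (Set.toFinite (G.neighborSet u)).sep _

theorem finite_trappedRegion (F : Set V) (u : V) : (trappedRegion G F u).Finite := by
  have cover_finite : (⋃ w ∈ {w ∈ G.neighborSet u |
      (avoidingComponent G (insert u F) w).Finite}, avoidingComponent G (insert u F) w).Finite :=
    ((Set.toFinite (G.neighborSet u)).sep _).biUnion fun _ hw => hw.2
  refine (cover_finite.insert u).subset fun x hx => ?_
  rcases eq_or_ne x u with rfl | hxu
  · exact Set.mem_insert _ _
  · obtain ⟨w, huw, hxw⟩ := exists_adj_mem_avoidingComponent_insert hx.1 hxu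
    exact Or.inr (Set.mem_biUnion ⟨huw, avoidingComponent_eq_of_mem hxw ▸ hx.2⟩ hxw)

theorem escapes_nonempty (hu : (avoidingComponent G F u).Infinite) :
    (escapes G F u).Nonempty := by
  obtain ⟨x, hx, hx'⟩ := hu.exists_notMem_finite (finite_trappedRegion (G := G) F u)
  have hxu : x ≠ u := by
    rintro rfl
    exact hx' (self_mem_trappedRegion (notMem_of_infinite_avoidingComponent hu))
  obtain ⟨w, huw, hxw⟩ := exists_adj_mem_avoidingComponent_insert hx hxu
  exact ⟨w, huw, fun hfin => hx' ⟨hx, avoidingComponent_eq_of_mem hxw ▸ hfin⟩⟩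

/-- The number of edges between the visited set `F` and the component of `u` in `G - F`: the
potential that controls the number of escapes along a walk. -/
noncomputable def contactCount (G : SimpleGraph V) (F : Set V) (u : V) : ℕ :=
  (edgesBetween G F (avoidingComponent G F u)).ncard

theorem contactCount_pos (hF : F.Finite) (hx : x ∈ F) (hxu : G.Adj x u) (hu : u ∉ F) :
    0 < contactCount G F u :=
  (Set.ncard_pos (finite_edgesBetween hF _)).2 ⟨(x, u), hx, self_mem_avoidingComponent hu, hxu⟩

theorem ncard_escapes_le (F : Set V) (u : V) :
    (escapes G F u).ncard ≤ (G.neighborSet u).ncard :=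
  Set.ncard_le_ncard (Set.sep_subset _ _) (Set.toFinite _)

theorem ncard_escapes_lt (hx : x ∈ F) (hux : G.Adj u x) :
    (escapes G F u).ncard < (G.neighborSet u).ncard :=
  Set.ncard_lt_ncard ⟨Set.sep_subset _ _, fun h =>
    notMem_of_infinite_avoidingComponent (h hux).2 (Set.mem_insert_of_mem u hx)⟩ (Set.toFinite _)

theorem contactCount_insert_le (hw : w ∈ escapes G F u) :
    contactCount G (insert u F) w ≤ (escapes G F u).ncard +
      (edgesBetween G F (avoidingComponent G (insert u F) w)).ncard := by
  have neighbors_subset : G.neighborSet u ∩ avoidingComponent G (insert u F) w ⊆ escapes G F u :=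
    fun x hx => ⟨hx.1, avoidingComponent_eq_of_mem hx.2 ▸ hw.2⟩
  calc contactCount G (insert u F) w
      ≤ (edgesBetween G {u} (avoidingComponent G (insert u F) w)).ncard +
          (edgesBetween G F (avoidingComponent G (insert u F) w)).ncard := by
        rw [contactCount, edgesBetween_insert_left]
        exact Set.ncard_union_le _ _
    _ ≤ _ := by
        rw [ncard_edgesBetween_singleton_left]
        gcongr
        exact finite_escapes F u

theorem ncard_edgeBoundary_trappedRegion_le (F : Set V) (u : V) :
    (edgeBoundary G (trappedRegion G F u)).ncard ≤
      (edgesBetween G F (trappedRegion G F u)).ncard + (escapes G F u).ncard := by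
  calc (edgeBoundary G (trappedRegion G F u)).ncard
      ≤ (edgesBetween G (trappedRegion G F u) F ∪ edgesBetween G {u} (escapes G F u)).ncard :=
        Set.ncard_le_ncard (edgeBoundary_trappedRegion_subset F u)
          ((finite_edgesBetween (finite_trappedRegion F u) F).union
            (finite_edgesBetween (Set.finite_singleton u) _))
    _ ≤ (edgesBetween G (trappedRegion G F u) F).ncard +
          (edgesBetween G {u} (escapes G F u)).ncard := Set.ncard_union_le _ _
    _ ≤ _ := by
        rw [ncard_edgesBetween_comm, ncard_edgesBetween_singleton_left]
        gcongr
        · exact finite_escapes F u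
        · exact Set.inter_subset_right

theorem contactCount_insert_add_le {Δ : ℕ}
    (hbd : ∀ S : Set V, S.Nonempty → S.Finite → Δ ≤ (edgeBoundary G S).ncard) (hF : F.Finite)
    (hu : u ∉ F) (hw : w ∈ escapes G F u) :
    contactCount G (insert u F) w + Δ ≤ contactCount G F u + 2 * (escapes G F u).ncard := by
  have finite_contacts (T : Set V) : (edgesBetween G F T).Finite := finite_edgesBetween hF T
  have disjoint_contacts :
      (edgesBetween G F (avoidingComponent G (insert u F) w)).ncard +
        (edgesBetween G F (trappedRegion G F u)).ncard ≤ contactCount G F u := by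
    rw [← Set.ncard_union_eq (edgesBetween_disjoint_right
      (disjoint_avoidingComponent_insert_trappedRegion hw) F) (finite_contacts _)
      (finite_contacts _)]
    refine Set.ncard_le_ncard (Set.union_subset ?_ ?_) (finite_contacts _)
    · exact edgesBetween_mono subset_rfl (avoidingComponent_insert_subset hu hw)
    · exact edgesBetween_mono subset_rfl (Set.sep_subset _ _)
  have trapped_boundary : Δ ≤ (edgeBoundary G (trappedRegion G F u)).ncard :=
    hbd _ ⟨u, self_mem_trappedRegion hu⟩ (finite_trappedRegion F u)
  have := contactCount_insert_le (F := F) hw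
  have := ncard_edgeBoundary_trappedRegion_le (G := G) F u
  omega

end Components

section ExtendableWalks

variable {V : Type*} {G : SimpleGraph V} {F : Set V} {u w x : V} {f : ℕ → V} {m s y : ℕ}

/-- `f` is an infinite self-avoiding walk from `u` that avoids `F`. -/
structure IsRay (G : SimpleGraph V) (F : Set V) (u : V) (f : ℕ → V) : Prop where
  zero : f 0 = u
  injective : Function.Injective f
  adj : ∀ i, G.Adj (f i) (f (i + 1))
  notMem : ∀ i, f i ∉ F

theorem IsRay.cons (hf : IsRay G (insert u F) w f) (huw : G.Adj u w) (hu : u ∉ F) :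
    IsRay G F u fun | 0 => u | i + 1 => f i where
  zero := rfl
  injective := by
    have ne_head (i : ℕ) : f i ≠ u := fun h => hf.notMem i (h ▸ Set.mem_insert u F)
    rintro (_ | i) (_ | j) hij
    · rfl
    · exact absurd hij.symm (ne_head j)
    · exact absurd hij (ne_head i)
    · exact congrArg (· + 1) (hf.injective hij)
  adj
    | 0 => show G.Adj u (f 0) from hf.zero.symm ▸ huw
    | i + 1 => hf.adj i
  notMem
    | 0 => hu
    | i + 1 => fun h => hf.notMem i (Set.mem_insert_of_mem u h)

/-- The walks of length `m` from `u` that extend to an infinite self-avoiding walk avoiding `F`.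
They are automatically self-avoiding. -/
def extendableWalks (G : SimpleGraph V) (F : Set V) (u : V) (m : ℕ) : Set (Σ w, G.Walk u w) :=
  {p | p.2.length = m ∧ ∃ f, IsRay G F u f ∧ ∀ i ≤ m, f i = p.2.getVert i}

theorem fwdSawCount_eq_ncard_extendableWalks (G : SimpleGraph V) (v : V) (n : ℕ) :
    fwdSawCount G v n = (extendableWalks G ∅ v n).ncard := by
  rw [fwdSawCount, ← Nat.card_coe_set_eq]
  refine Nat.card_congr (Equiv.subtypeEquivRight fun p => ⟨?_, ?_⟩)
  · rintro ⟨-, hlen, f, hinj, hadj, hf⟩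
    exact ⟨hlen, f, ⟨by simpa using hf 0 n.zero_le, hinj, hadj, by simp⟩, hf⟩
  · rintro ⟨rfl, f, hray, hf⟩
    refine ⟨(SimpleGraph.Walk.IsPath.getVert_injOn_iff p.2).1 fun i hi j hj hij => ?_,
      rfl, f, hray.injective, hray.adj, hf⟩
    exact hray.injective (((hf i hi).trans hij).trans (hf j hj).symm)

theorem cons_mem_extendableWalks {p : G.Walk w x} (hp : ⟨x, p⟩ ∈ extendableWalks G (insert u F) w m)
    (huw : G.Adj u w) (hu : u ∉ F) : ⟨x, p.cons huw⟩ ∈ extendableWalks G F u (m + 1) := by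
  obtain ⟨hlen, f, hray, hf⟩ := hp
  refine ⟨by simpa using hlen, _, hray.cons huw hu, ?_⟩
  rintro (_ | i) hi
  · rfl
  · exact hf i (Nat.le_of_succ_le_succ hi)

variable [∀ v, Finite (G.neighborSet v)]

theorem exists_isRay (hu : (avoidingComponent G F u).Infinite) : ∃ f, IsRay G F u f := by
  let State := {p : Set V × V // (avoidingComponent G p.1 p.2).Infinite}
  choose escape hescape using fun p : State => escapes_nonempty p.2
  let next (p : State) : State := ⟨(insert p.1.2 p.1.1, escape p), (hescape p).2⟩
  let state (n : ℕ) : State := next^[n] ⟨(F, u), hu⟩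
  have state_succ (n : ℕ) : state (n + 1) = next (state n) :=
    Function.iterate_succ_apply' next n _
  have visited_mono : Monotone fun n => (state n).1.1 := monotone_nat_of_le_succ fun n => by
    rw [state_succ]
    exact Set.subset_insert _ _
  have current_notMem (n : ℕ) : (state n).1.2 ∉ (state n).1.1 :=
    notMem_of_infinite_avoidingComponent (state n).2
  have mem_visited {i j : ℕ} (hij : i < j) : (state i).1.2 ∈ (state j).1.1 := by
    refine visited_mono (Nat.succ_le_of_lt hij) ?_
    beta_reduce
    rw [state_succ]
    exact Set.mem_insert _ _
  refine ⟨fun n => (state n).1.2, rfl, ?_, fun i => ?_, fun i hi => ?_⟩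
  · exact .of_lt_imp_ne fun i j hij h => current_notMem j (h ▸ mem_visited hij)
  · rw [state_succ]
    exact (hescape _).1
  · exact current_notMem i (visited_mono i.zero_le hi)

theorem finite_walks_of_length (u : V) (m : ℕ) :
    {p : Σ w, G.Walk u w | p.2.length = m}.Finite := by
  induction m generalizing u with
  | zero =>
    refine (Set.finite_singleton ⟨u, .nil⟩).subset ?_
    rintro ⟨_, _ | _⟩ hp
    · rfl
    · simp at hp
  | succ m ih =>
    have image_finite (w : G.neighborSet u) :=
      (ih w).image (Sigma.map id fun _ => SimpleGraph.Walk.cons w.2)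
    refine (Set.finite_iUnion image_finite).subset ?_
    rintro ⟨x, _ | ⟨huw, p⟩⟩ hp
    · simp at hp
    · exact Set.mem_iUnion.2 ⟨⟨_, huw⟩, ⟨x, p⟩, Nat.succ_injective hp, rfl⟩

theorem finite_extendableWalks (F : Set V) (u : V) (m : ℕ) :
    (extendableWalks G F u m).Finite :=
  (finite_walks_of_length u m).subset fun _ hp => hp.1

theorem ncard_extendableWalks_pos (hu : (avoidingComponent G F u).Infinite) (m : ℕ) :
    0 < (extendableWalks G F u m).ncard := by
  refine (Set.ncard_pos (finite_extendableWalks F u m)).2 ?_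
  induction m generalizing F u with
  | zero =>
    obtain ⟨f, hf⟩ := exists_isRay hu
    exact ⟨⟨u, .nil⟩, rfl, f, hf, by simpa using hf.zero⟩
  | succ m ih =>
    obtain ⟨w, hw⟩ := escapes_nonempty hu
    obtain ⟨⟨x, p⟩, hp⟩ := ih hw.2
    exact ⟨_, cons_mem_extendableWalks hp hw.1 (notMem_of_infinite_avoidingComponent hu)⟩

theorem ncard_escapes_mul_le {k : ℕ} (hu : u ∉ F)
    (hk : ∀ w ∈ escapes G F u, k ≤ (extendableWalks G (insert u F) w m).ncard) :
    (escapes G F u).ncard * k ≤ (extendableWalks G F u (m + 1)).ncard := by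
  have hfin := finite_extendableWalks (G := G) F u (m + 1)
  refine ncard_mul_le_ncard_of_le_ncard_fiber hfin (fun p => p.2.snd) fun w hw => ?_
  have huw : G.Adj u w := hw.1
  let cons : (Σ x, G.Walk w x) → Σ x, G.Walk u x := Sigma.map id fun _ => .cons huw
  have cons_injective : Function.Injective cons :=
    Function.injective_id.sigma_map fun _ _ _ h => by simpa using h
  calc k ≤ (extendableWalks G (insert u F) w m).ncard := hk w hw
    _ = (cons '' extendableWalks G (insert u F) w m).ncard :=
        (Set.ncard_image_of_injective _ cons_injective).symm
    _ ≤ {p ∈ extendableWalks G F u (m + 1) | p.2.snd = w}.ncard := by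
        refine Set.ncard_le_ncard (Set.image_subset_iff.2 fun p hp => ?_) (hfin.sep _)
        exact ⟨cons_mem_extendableWalks hp huw hu, p.2.snd_cons huw⟩

theorem pow_add_le_ncard_extendableWalks_pow {k : ℕ} (hu : u ∉ F) (hky : k ≤ y)
    (hk : k < (escapes G F u).ncard)
    (hs : ∀ w ∈ escapes G F u, (1 + y) ^ s ≤ (extendableWalks G (insert u F) w m).ncard ^ y) :
    (1 + y) ^ (k + s) ≤ (extendableWalks G F u (m + 1)).ncard ^ y := by
  obtain ⟨w, hw, hmin⟩ := Set.exists_min_image (escapes G F u)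
    (fun w => (extendableWalks G (insert u F) w m).ncard) (finite_escapes F u)
    (Set.nonempty_of_ncard_ne_zero (Nat.ne_zero_of_lt hk))
  calc (1 + y) ^ (k + s)
      = (1 + y) ^ k * (1 + y) ^ s := pow_add _ _ _
    _ ≤ (1 + k) ^ y * (extendableWalks G (insert u F) w m).ncard ^ y :=
        Nat.mul_le_mul (one_add_pow_le_one_add_pow hky) (hs w hw)
    _ = ((1 + k) * (extendableWalks G (insert u F) w m).ncard) ^ y := (mul_pow _ _ _).symm
    _ ≤ ((escapes G F u).ncard * (extendableWalks G (insert u F) w m).ncard) ^ y := by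
        gcongr
        omega
    _ ≤ (extendableWalks G F u (m + 1)).ncard ^ y := by
        gcongr
        exact ncard_escapes_mul_le hu hmin

/-- `hs` says that the potential inequality, summed over `m` further steps, forces the surpluses
"number of escapes minus one" to add up to at least `s`. -/
theorem pow_le_ncard_extendableWalks_pow (hdeg : ∀ v, (G.neighborSet v).ncard ≤ y + 2)
    (hbd : ∀ S : Set V, S.Nonempty → S.Finite → y + 2 ≤ (edgeBoundary G S).ncard)
    (hF : F.Finite) (hu : (avoidingComponent G F u).Infinite) (hx : x ∈ F) (hux : G.Adj u x)
    (hs : 2 * s + contactCount G F u ≤ m * y + 2) :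
    (1 + y) ^ s ≤ (extendableWalks G F u m).ncard ^ y := by
  have hu' := notMem_of_infinite_avoidingComponent hu
  have contacts_pos := contactCount_pos hF hx hux.symm hu'
  induction m generalizing F u x s with
  | zero =>
    obtain rfl : s = 0 := by omega
    simpa using Nat.one_le_pow _ _ (ncard_extendableWalks_pos hu 0)
  | succ m ih =>
    set c := (escapes G F u).ncard
    have c_pos : 0 < c := (Set.ncard_pos (finite_escapes F u)).2 (escapes_nonempty hu)
    have c_lt : c < y + 2 := (ncard_escapes_lt hx hux).trans_le (hdeg u)
    obtain ⟨k, s', rfl, hk, hs'⟩ : ∃ k s', k + s' = s ∧ k < c ∧ (s' = 0 ∨ k + 1 = c) := by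
      rcases le_total s (c - 1) with h | h
      · exact ⟨s, 0, rfl, by omega, .inl rfl⟩
      · exact ⟨c - 1, s - (c - 1), by omega, by omega, .inr (by omega)⟩
    refine pow_add_le_ncard_extendableWalks_pow hu' (by omega) hk fun w hw => ?_
    rcases hs' with rfl | hk'
    · simpa using Nat.one_le_pow _ _ (ncard_extendableWalks_pos hw.2 m)
    have hw' := notMem_of_infinite_avoidingComponent hw.2
    have contacts_le := contactCount_insert_add_le hbd hF hu' hw
    refine ih (hF.insert u) hw.2 (Set.mem_insert u F) hw.1.symm ?_ hw'
      (contactCount_pos (hF.insert u) (Set.mem_insert u F) hw.1 hw')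
    rw [add_one_mul] at hs
    omega

theorem pow_le_fwdSawCount_of_le_ncard_edgeBoundary {Δ : ℕ} (hΔ : 2 ≤ Δ)
    (hdeg : ∀ v, (G.neighborSet v).ncard ≤ Δ)
    (hbd : ∀ S : Set V, S.Nonempty → S.Finite → Δ ≤ (edgeBoundary G S).ncard) (v : V) (n : ℕ) :
    (Δ - 1) ^ n ≤ fwdSawCount G v (2 * n) := by
  obtain ⟨y, rfl⟩ := Nat.exists_eq_add_of_le' hΔ
  have hv : (avoidingComponent G ∅ v).Infinite := infinite_avoidingComponent_empty (fun S hS hfin =>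
    Set.nonempty_of_ncard_ne_zero (by have := hbd S hS hfin; omega)) v
  rw [fwdSawCount_eq_ncard_extendableWalks, show y + 2 - 1 = 1 + y by omega]
  have walks_pos := ncard_extendableWalks_pos hv (2 * n)
  rcases n.eq_zero_or_pos with rfl | hn
  · simpa using Nat.succ_le_of_lt walks_pos
  rcases y.eq_zero_or_pos with rfl | hy
  · simpa using Nat.succ_le_of_lt walks_pos
  refine (Nat.pow_le_pow_iff_left hy.ne').1 ?_
  obtain ⟨n, rfl⟩ := Nat.exists_eq_add_of_le' hn
  set c := (escapes G ∅ v).ncard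
  have c_pos : 0 < c := (Set.ncard_pos (finite_escapes ∅ v)).2 (escapes_nonempty hv)
  have c_le : c ≤ y + 2 := (ncard_escapes_le ∅ v).trans (hdeg v)
  have contacts_zero : contactCount G ∅ v = 0 := by simp [contactCount, edgesBetween]
  -- At the first vertex all `y + 2` neighbours may escape, and then only a surplus of `y` counts.
  have exponent_eq : (n + 1) * y = min (c - 1) y + (n * y + (y - min (c - 1) y)) := by
    rw [add_one_mul]
    omega
  rw [← pow_mul, exponent_eq, show 2 * (n + 1) = 2 * n + 1 + 1 by ring]
  refine pow_add_le_ncard_extendableWalks_pow (Set.notMem_empty v) (min_le_right _ _) (by omega)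
    fun w hw => pow_le_ncard_extendableWalks_pow hdeg hbd (Set.finite_empty.insert v) hw.2
      (Set.mem_insert v ∅) hw.1.symm ?_
  have contacts_le := contactCount_insert_add_le hbd Set.finite_empty (Set.notMem_empty v) hw
  have : (2 * n + 1) * y = 2 * (n * y) + y := by ring
  omega

end ExtendableWalks

end ForwardSaw

/-- For an infinite, connected, `Δ`-regular, vertex-transitive simple graph with `Δ ≥ 2`,
the number of forward-extendable `2n`-step SAWs from any vertex is at least `(Δ−1)ⁿ`. -/
theorem fwd_saw_count_lower_bound {V : Type*} (G : SimpleGraph V) [Infinite V]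
    (Δ : ℕ) (hΔ : 2 ≤ Δ)
    (hconn : G.Connected)
    (hreg : ∀ v : V, (G.neighborSet v).ncard = Δ)
    (htrans : ∀ v w : V, ∃ γ : G ≃g G, γ v = w) :
    ∀ (v : V) (n : ℕ), (Δ - 1) ^ n ≤ fwdSawCount G v (2 * n) := by
  have (v : V) : Finite (G.neighborSet v) :=
    Set.finite_of_ncard_pos (by rw [hreg v]; omega)
  have le_boundary (S : Set V) (hS : S.Nonempty) (hfin : S.Finite) :
      Δ ≤ (ForwardSaw.edgeBoundary G S).ncard :=
    ForwardSaw.le_ncard_edgeBoundary_of_vertexTransitive hconn (fun v => (hreg v).ge) htrans hS hfin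
  exact ForwardSaw.pow_le_fwdSawCount_of_le_ncard_edgeBoundary hΔ (fun v => (hreg v).le) le_boundary
end

section
/- Let Δ ≥ 2 and let G be an infinite, connected, quasi-transitive, Δ-regular simple graph that contains at least one cycle. If σ_n(v)^{1/n} → μ as n → ∞ for some vertex v, then μ < Δ − 1. -/
open Filter

/-- The number of `n`-step self-avoiding walks in `G` starting at `v`. -/
noncomputable def sawCount {V : Type*} (G : SimpleGraph V) (v : V) (n : ℕ) : ℕ :=
  Nat.card {p : Σ w : V, G.Walk v w // p.2.IsPath ∧ p.2.length = n}

/-!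
Call a directed edge `(a, b)` saturated if the self-avoiding walks that continue it form a full
`(Δ - 1)`-ary tree. Saturation passes to every edge `(b, c)` with `c ≠ a`, and no saturated edge
ends on a cycle, since going round the cycle would produce a walk that closes up. Hence a saturated
edge `(a, b)` points away from every cycle: for `c` on a cycle, `a` is closer to `c` than `b` is.
Following saturated edges one therefore gets arbitrarily far from all cycles, which is impossible in
a connected quasi-transitive graph with a cycle. So no edge is saturated, and up to automorphisms
there are finitely many edges, so some `N` works for all of them: each edge has at most
`q = (Δ - 1) ^ N - 1` self-avoiding continuations of length `N`. By submultiplicativity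
`μ ≤ q ^ (1 / N) < Δ - 1`.
-/

section Counting

variable {V W : Type*} [DecidableEq V] [DecidableEq W] (G : SimpleGraph V) [G.LocallyFinite]

/-- The number of `n`-step self-avoiding walks from `v` none of whose vertices after `v` lies in
`A`; the recursion is over the first step. The walks starting with the directed edge `(a, b)` are
counted by taking `A = {a}` and `v = b`. -/
def avoidingSawCount : Finset V → V → ℕ → ℕ
  | _, _, 0 => 1
  | A, v, n + 1 => ∑ c ∈ G.neighborFinset v \ A, avoidingSawCount (insert v A) c n

theorem exists_finset_support_mem (A : Finset V) (v : V) (n : ℕ) :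
    ∃ S : Finset (List V), S.card ≤ avoidingSawCount G A v n ∧
      ∀ (w : V) (p : G.Walk v w), p.IsPath → p.length = n → (∀ x ∈ p.support.tail, x ∉ A) →
        p.support ∈ S := by
  induction n generalizing A v with
  | zero =>
    refine ⟨{[v]}, by simp [avoidingSawCount], fun w p _ hlen _ => ?_⟩
    cases p with
    | nil => simp
    | cons => simp at hlen
  | succ n ih =>
    choose S hcard hmem using ih (insert v A)
    refine ⟨(G.neighborFinset v \ A).biUnion fun c => (S c).image (v :: ·), ?_, ?_⟩
    · exact Finset.card_biUnion_le.trans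
        (Finset.sum_le_sum fun c _ => Finset.card_image_le.trans (hcard c))
    · rintro w (_ | @⟨_, c, _, hvc, p⟩) hp hlen hA
      · simp at hlen
      · obtain ⟨hp, hv⟩ := (SimpleGraph.Walk.cons_isPath_iff hvc p).1 hp
        simp only [SimpleGraph.Walk.support_cons, List.tail_cons] at hA ⊢
        simp only [Finset.mem_biUnion, Finset.mem_sdiff, SimpleGraph.mem_neighborFinset]
        refine ⟨c, ⟨hvc, hA c p.start_mem_support⟩, Finset.mem_image_of_mem _ ?_⟩
        refine hmem c w p hp (by simpa using hlen) fun x hx => ?_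
        have hxp := List.mem_of_mem_tail hx
        simpa using ⟨ne_of_mem_of_not_mem hxp hv, hA x hxp⟩

theorem sawCount_le_avoidingSawCount (v : V) (n : ℕ) :
    sawCount G v n ≤ avoidingSawCount G ∅ v n := by
  obtain ⟨S, hcard, hmem⟩ := exists_finset_support_mem G ∅ v n
  refine le_trans ?_ hcard
  rw [sawCount, ← Nat.card_eq_finsetCard S]
  refine Nat.card_le_card_of_injective
    (fun p => (⟨p.1.2.support, hmem _ p.1.2 p.2.1 p.2.2 (by simp)⟩ : S)) ?_
  rintro ⟨⟨w, p⟩, hp⟩ ⟨⟨w', p'⟩, hp'⟩ h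
  have hsupp : p.support = p'.support := congrArg Subtype.val h
  obtain rfl : w = w' := by
    rw [← p.getLast_support, ← p'.getLast_support]
    simp only [hsupp]
  obtain rfl := SimpleGraph.Walk.ext_support hsupp
  rfl

variable {G}

theorem avoidingSawCount_one (A : Finset V) (v : V) :
    avoidingSawCount G A v 1 = (G.neighborFinset v \ A).card := by
  simp [avoidingSawCount]

theorem avoidingSawCount_anti {A B : Finset V} (hAB : A ⊆ B) (v : V) (n : ℕ) :
    avoidingSawCount G B v n ≤ avoidingSawCount G A v n := by
  induction n generalizing A B v with
  | zero => exact le_rfl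
  | succ n ih =>
    exact (Finset.sum_le_sum fun c _ => ih (Finset.insert_subset_insert v hAB) c).trans
      (Finset.sum_le_sum_of_subset (Finset.sdiff_subset_sdiff subset_rfl hAB))

theorem avoidingSawCount_map {H : SimpleGraph W} [H.LocallyFinite] (γ : G ≃g H)
    (A : Finset V) (v : V) (n : ℕ) :
    avoidingSawCount H (A.map γ.toEquiv.toEmbedding) (γ v) n = avoidingSawCount G A v n := by
  induction n generalizing A v with
  | zero => rfl
  | succ n ih =>
    have hnbr : H.neighborFinset (γ v) \ A.map γ.toEquiv.toEmbedding =
        (G.neighborFinset v \ A).map γ.toEquiv.toEmbedding := by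
      ext x
      obtain ⟨y, rfl⟩ := γ.surjective x
      have hmem (B : Finset V) : γ y ∈ B.map γ.toEquiv.toEmbedding ↔ y ∈ B := Finset.mem_map' _
      simp only [Finset.mem_sdiff, SimpleGraph.mem_neighborFinset, hmem, γ.map_adj_iff]
    simp only [avoidingSawCount, hnbr, Finset.sum_map, ← ih, Finset.map_insert]
    rfl

theorem avoidingSawCount_add_le {n M : ℕ}
    (hM : ∀ a b, G.Adj a b → avoidingSawCount G {a} b n ≤ M) {A : Finset V} {a v : V}
    (ha : a ∈ A) (hav : G.Adj a v) (m : ℕ) :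
    avoidingSawCount G A v (m + n) ≤ avoidingSawCount G A v m * M := by
  induction m generalizing A a v with
  | zero =>
    rw [Nat.zero_add, avoidingSawCount, Nat.one_mul]
    exact (avoidingSawCount_anti (Finset.singleton_subset_iff.2 ha) v n).trans (hM a v hav)
  | succ m ih =>
    rw [Nat.succ_add, avoidingSawCount, avoidingSawCount, Finset.sum_mul]
    refine Finset.sum_le_sum fun c hc => ih (Finset.mem_insert_self v A) ?_
    exact (G.mem_neighborFinset v c).1 (Finset.mem_sdiff.1 hc).1

theorem avoidingSawCount_mul_le_pow {N q : ℕ}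
    (hq : ∀ a b, G.Adj a b → avoidingSawCount G {a} b N ≤ q) (k : ℕ) {a b : V}
    (hab : G.Adj a b) : avoidingSawCount G {a} b (N * k) ≤ q ^ k := by
  induction k generalizing a b with
  | zero => exact le_rfl
  | succ k ih =>
    rw [Nat.mul_succ, pow_succ]
    exact (avoidingSawCount_add_le hq (Finset.mem_singleton_self a) hab (N * k)).trans
      (Nat.mul_le_mul_right q (ih hab))

theorem sawCount_succ_le {n M : ℕ} (hM : ∀ a b, G.Adj a b → avoidingSawCount G {a} b n ≤ M)
    (v : V) : sawCount G v (n + 1) ≤ G.degree v * M := by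
  refine (sawCount_le_avoidingSawCount G v (n + 1)).trans ?_
  simp only [avoidingSawCount, Finset.sdiff_empty, insert_empty_eq]
  exact Finset.sum_le_card_nsmul _ _ M fun c hc => hM v c ((G.mem_neighborFinset v c).1 hc)

end Counting

section Saturation

variable {V : Type*} [DecidableEq V] {G : SimpleGraph V} [G.LocallyFinite] {d : ℕ}

theorem card_neighborFinset_sdiff_le (hdeg : ∀ v, G.degree v ≤ d + 1) {A : Finset V} {a v : V}
    (ha : a ∈ A) (hav : G.Adj a v) : (G.neighborFinset v \ A).card ≤ d := by
  refine Nat.le_of_lt_succ (lt_of_lt_of_le (Finset.card_lt_card ?_) (hdeg v))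
  refine Finset.ssubset_iff_subset_ne.2 ⟨Finset.sdiff_subset, fun h => ?_⟩
  exact Finset.disjoint_left.1 (Finset.sdiff_eq_self_iff_disjoint.1 h)
    ((G.mem_neighborFinset v a).2 hav.symm) ha

theorem avoidingSawCount_le_pow (hdeg : ∀ v, G.degree v ≤ d + 1) {A : Finset V} {a v : V}
    (ha : a ∈ A) (hav : G.Adj a v) (n : ℕ) : avoidingSawCount G A v n ≤ d ^ n := by
  have hone : ∀ a b, G.Adj a b → avoidingSawCount G {a} b 1 ≤ d := fun a b hab => by
    rw [avoidingSawCount_one]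
    exact card_neighborFinset_sdiff_le hdeg (Finset.mem_singleton_self a) hab
  refine (avoidingSawCount_anti (Finset.singleton_subset_iff.2 ha) v n).trans ?_
  simpa only [Nat.one_mul] using avoidingSawCount_mul_le_pow hone n hav

variable (G d) in
/-- The self-avoiding walks from `v` that avoid `A` afterwards form a full `d`-ary tree. For
`A = {a}` this says that the directed edge `(a, v)` is saturated; larger sets `A` keep track of the
vertices already visited. -/
def IsSaturated (A : Finset V) (v : V) : Prop :=
  ∀ n, avoidingSawCount G A v n = d ^ n

namespace IsSaturated

variable {A B : Finset V} {a v c : V}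

theorem card_neighborFinset_sdiff (h : IsSaturated G d A v) :
    (G.neighborFinset v \ A).card = d := by
  rw [← avoidingSawCount_one, h 1, pow_one]

theorem of_subset (hdeg : ∀ v, G.degree v ≤ d + 1) (h : IsSaturated G d B v) (hAB : A ⊆ B)
    (ha : a ∈ A) (hav : G.Adj a v) : IsSaturated G d A v := fun n =>
  (avoidingSawCount_le_pow hdeg ha hav n).antisymm
    ((h n).symm.le.trans (avoidingSawCount_anti hAB v n))

theorem insert_of_adj (hdeg : ∀ v, G.degree v ≤ d + 1) (h : IsSaturated G d A v)
    (hvc : G.Adj v c) (hcA : c ∉ A) : IsSaturated G d (insert v A) c := by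
  intro n
  have hle : ∀ x ∈ G.neighborFinset v \ A, avoidingSawCount G (insert v A) x n ≤ d ^ n :=
    fun x hx => avoidingSawCount_le_pow hdeg (Finset.mem_insert_self v A)
      ((G.mem_neighborFinset v x).1 (Finset.mem_sdiff.1 hx).1) n
  have hsum : ∑ x ∈ G.neighborFinset v \ A, avoidingSawCount G (insert v A) x n =
      ∑ _x ∈ G.neighborFinset v \ A, d ^ n := by
    rw [Finset.sum_const, h.card_neighborFinset_sdiff, smul_eq_mul, ← pow_succ']
    exact h (n + 1)
  exact (Finset.sum_eq_sum_iff_of_le hle).1 hsum c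
    (Finset.mem_sdiff.2 ⟨(G.mem_neighborFinset v c).2 hvc, hcA⟩)

theorem singleton_of_adj (hdeg : ∀ v, G.degree v ≤ d + 1) (h : IsSaturated G d {a} v)
    (hvc : G.Adj v c) (hca : c ≠ a) : IsSaturated G d {v} c :=
  (h.insert_of_adj hdeg hvc (Finset.notMem_singleton.2 hca)).of_subset hdeg
    (Finset.singleton_subset_iff.2 (Finset.mem_insert_self v _)) (Finset.mem_singleton_self v) hvc

theorem eq_of_adj (hdeg : ∀ v, G.degree v ≤ d + 1) (h : IsSaturated G d A v)
    (ha : a ∈ A) (hc : c ∈ A) (hva : G.Adj v a) (hvc : G.Adj v c) : a = c := by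
  have hinter : (G.neighborFinset v ∩ A).card ≤ 1 := by
    have hsplit := Finset.card_sdiff_add_card_inter (G.neighborFinset v) A
    have hdegv := hdeg v
    rw [h.card_neighborFinset_sdiff, G.card_neighborFinset_eq_degree] at hsplit
    lia
  exact Finset.card_le_one.1 hinter a (by simp [hva, ha]) c (by simp [hvc, hc])

theorem end_notMem_of_isPath (hdeg : ∀ v, G.degree v ≤ d + 1) {w : V} (p : G.Walk v w)
    (hp : p.IsPath) (h : IsSaturated G d A v) (ha : a ∈ A) (hva : G.Adj v a) (hvA : v ∉ A)
    (hsnd : p.snd ≠ a) : w ∉ A := by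
  induction p generalizing A a with
  | nil => exact hvA
  | @cons v y w hvy p ih =>
    obtain ⟨hp, hvp⟩ := (SimpleGraph.Walk.cons_isPath_iff hvy p).1 hp
    rw [SimpleGraph.Walk.snd_cons] at hsnd
    have hyA : y ∉ A := fun hyA => hsnd (h.eq_of_adj hdeg hyA ha hvy hva)
    have hw := ih hp (h.insert_of_adj hdeg hvy hyA) (Finset.mem_insert_self v A) hvy.symm
      (by simpa using ⟨hvy.ne', hyA⟩) (ne_of_mem_of_not_mem (p.getVert_mem_support 1) hvp)
    exact fun hwA => hw (Finset.mem_insert_of_mem hwA)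

end IsSaturated

theorem not_isSaturated_of_isCycle (hdeg : ∀ v, G.degree v ≤ d + 1) {u c : V}
    {p : G.Walk c c} (hp : p.IsCycle) : ¬ IsSaturated G d {u} c := by
  intro hsat
  wlog hsnd : p.snd ≠ u generalizing p with H
  · refine H hp.reverse ?_
    rw [SimpleGraph.Walk.snd_reverse, ← not_not.1 hsnd]
    exact hp.snd_ne_penultimate.symm
  cases p with
  | nil => exact hp.ne_nil rfl
  | @cons _ z _ hcz q =>
    obtain ⟨hq, hedge⟩ := (SimpleGraph.Walk.cons_isCycle_iff q hcz).1 hp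
    rw [SimpleGraph.Walk.snd_cons] at hsnd
    have hqnil : ¬ q.Nil := SimpleGraph.Walk.not_nil_of_ne hcz.ne'
    have hqsnd : q.snd ≠ c := fun h => hedge (by
      simpa [h, Sym2.eq_swap] using q.mk_start_snd_mem_edges hqnil)
    exact (hsat.singleton_of_adj hdeg hcz hsnd).end_notMem_of_isPath hdeg q hq
      (Finset.mem_singleton_self c) hcz.symm (Finset.notMem_singleton.2 hcz.ne') hqsnd
      (Finset.mem_singleton_self c)

end Saturation

section ForwardClosed

variable {V : Type*} {G : SimpleGraph V} {R : V → V → Prop}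

theorem dist_lt_dist_of_forward_closed (hconn : G.Connected)
    (hR : ∀ a b c, R a b → G.Adj b c → c ≠ a → R b c) {a b c : V} (hc : ∀ x, ¬ R x c)
    (hab : R a b) : G.dist a c < G.dist b c := by
  induction hn : G.dist b c using Nat.strong_induction_on generalizing a b with
  | _ n ih =>
    obtain ⟨p, hp⟩ := hconn.exists_walk_length_eq_dist b c
    cases p with
    | nil => exact absurd hab (hc a)
    | @cons _ y _ hby q =>
      have hyc : G.dist y c < n := by
        have hlen : q.length + 1 = G.dist b c := hp
        have hdist := SimpleGraph.dist_le q
        lia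
      obtain rfl | hya := eq_or_ne y a
      · exact hyc
      · have hbc : G.dist b c < G.dist y c := hn ▸ ih _ hyc (hR a b y hab hby hya) rfl
        lia

theorem exists_le_dist_of_forward_closed (hconn : G.Connected)
    (hR : ∀ a b c, R a b → G.Adj b c → c ≠ a → R b c)
    (hext : ∀ a b, R a b → ∃ c, G.Adj b c ∧ c ≠ a) {a b : V} (hab : R a b) (k : ℕ) :
    ∃ x y, R x y ∧ ∀ c, (∀ z, ¬ R z c) → k ≤ G.dist y c := by
  induction k with
  | zero => exact ⟨a, b, hab, fun _ _ => Nat.zero_le _⟩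
  | succ k ih =>
    obtain ⟨x, y, hxy, hfar⟩ := ih
    obtain ⟨z, hyz, hzx⟩ := hext x y hxy
    have hR_yz := hR x y z hxy hyz hzx
    exact ⟨y, z, hR_yz, fun c hc =>
      (hfar c hc).trans_lt (dist_lt_dist_of_forward_closed hconn hR hc hR_yz)⟩

end ForwardClosed

section QuasiTransitive

variable {V : Type*} {G : SimpleGraph V}

theorem exists_forall_exists_isCycle_dist_le (hconn : G.Connected)
    (hqt : ∃ W : Finset V, ∀ v : V, ∃ w ∈ W, ∃ γ : G ≃g G, γ v = w)
    (hcycle : ∃ (u : V) (cyc : G.Walk u u), cyc.IsCycle) :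
    ∃ r, ∀ v, ∃ (c : V) (p : G.Walk c c), p.IsCycle ∧ G.dist v c ≤ r := by
  obtain ⟨W, hW⟩ := hqt
  obtain ⟨u, cyc, hcyc⟩ := hcycle
  refine ⟨W.sup fun w => G.dist w u, fun v => ?_⟩
  obtain ⟨w, hw, γ, rfl⟩ := hW v
  obtain ⟨q, hq⟩ := hconn.exists_walk_length_eq_dist (γ v) u
  refine ⟨γ.symm u, cyc.map γ.symm.toHom, hcyc.map γ.symm.injective, ?_⟩
  calc G.dist v (γ.symm u)
      ≤ ((q.map γ.symm.toHom).copy (γ.symm_apply_apply v) rfl).length := SimpleGraph.dist_le _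
    _ = G.dist (γ v) u := by simp [hq]
    _ ≤ W.sup fun w => G.dist w u := Finset.le_sup (f := fun w => G.dist w u) hw

variable [DecidableEq V] [G.LocallyFinite] {d : ℕ}

theorem not_isSaturated_singleton (hd : 1 ≤ d) (hdeg : ∀ v, G.degree v ≤ d + 1)
    (hconn : G.Connected) (hqt : ∃ W : Finset V, ∀ v : V, ∃ w ∈ W, ∃ γ : G ≃g G, γ v = w)
    (hcycle : ∃ (u : V) (cyc : G.Walk u u), cyc.IsCycle) (a b : V) :
    ¬ IsSaturated G d {a} b := by
  intro hab
  have hext : ∀ x y, IsSaturated G d {x} y → ∃ z, G.Adj y z ∧ z ≠ x := fun x y hxy => by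
    obtain ⟨z, hz⟩ := Finset.card_pos.1 (hd.trans_eq hxy.card_neighborFinset_sdiff.symm)
    exact ⟨z, by simpa using hz⟩
  obtain ⟨r, hr⟩ := exists_forall_exists_isCycle_dist_le hconn hqt hcycle
  obtain ⟨x, y, -, hfar⟩ := exists_le_dist_of_forward_closed hconn
    (fun _ _ _ hsat => hsat.singleton_of_adj hdeg) hext hab (r + 1)
  obtain ⟨c, p, hp, hyc⟩ := hr y
  have hyc' := hfar c fun z => not_isSaturated_of_isCycle hdeg hp
  lia

theorem eventually_avoidingSawCount_lt_pow (hd : 1 ≤ d) (hdeg : ∀ v, G.degree v ≤ d + 1)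
    {a b : V} (hab : G.Adj a b) (hsat : ¬ IsSaturated G d {a} b) :
    ∀ᶠ n in atTop, avoidingSawCount G {a} b n < d ^ n := by
  have ha := Finset.mem_singleton_self a
  obtain ⟨m, hm⟩ := not_forall.1 hsat
  have hlt := (avoidingSawCount_le_pow hdeg ha hab m).lt_of_ne hm
  filter_upwards [eventually_ge_atTop m] with n hn
  obtain ⟨k, rfl⟩ := Nat.exists_eq_add_of_le hn
  have hk : ∀ x y, G.Adj x y → avoidingSawCount G {x} y k ≤ d ^ k := fun x y hxy =>
    avoidingSawCount_le_pow hdeg (Finset.mem_singleton_self x) hxy k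
  calc avoidingSawCount G {a} b (m + k)
      ≤ avoidingSawCount G {a} b m * d ^ k := avoidingSawCount_add_le hk ha hab m
    _ < d ^ m * d ^ k := Nat.mul_lt_mul_of_pos_right hlt (Nat.pow_pos hd)
    _ = d ^ (m + k) := (pow_add d m k).symm

theorem exists_forall_avoidingSawCount_lt_pow (hd : 1 ≤ d) (hdeg : ∀ v, G.degree v ≤ d + 1)
    (hqt : ∃ W : Finset V, ∀ v : V, ∃ w ∈ W, ∃ γ : G ≃g G, γ v = w)
    (hsat : ∀ a b, G.Adj a b → ¬ IsSaturated G d {a} b) :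
    ∃ N, N ≠ 0 ∧ ∀ a b, G.Adj a b → avoidingSawCount G {a} b N < d ^ N := by
  obtain ⟨W, hW⟩ := hqt
  have hev : ∀ᶠ n in atTop, ∀ w ∈ W, ∀ b ∈ G.neighborFinset w,
      avoidingSawCount G {w} b n < d ^ n := by
    refine (eventually_all_finset W).2 fun w _ => (eventually_all_finset _).2 fun b hb => ?_
    have hwb := (G.mem_neighborFinset w b).1 hb
    exact eventually_avoidingSawCount_lt_pow hd hdeg hwb (hsat w b hwb)
  obtain ⟨N, hlt, hN⟩ := (hev.and (eventually_ne_atTop 0)).exists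
  refine ⟨N, hN, fun a b hab => ?_⟩
  obtain ⟨w, hw, γ, rfl⟩ := hW a
  rw [← avoidingSawCount_map γ, Finset.map_singleton]
  exact hlt (γ a) hw (γ b) ((G.mem_neighborFinset _ _).2 (γ.map_adj_iff.2 hab))

end QuasiTransitive

theorem le_rpow_inv_of_tendsto_rpow_one_div {f : ℕ → ℝ} {N : ℕ} (hN : N ≠ 0) {C q μ : ℝ}
    (hC : 0 < C) (hq : 0 ≤ q) (hf_nonneg : ∀ n, 0 ≤ f n) (hf : ∀ k, f (N * k + 1) ≤ C * q ^ k)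
    (hμ : Tendsto (fun n : ℕ => f n ^ ((1 : ℝ) / n)) atTop (nhds μ)) :
    μ ≤ q ^ (N : ℝ)⁻¹ := by
  have hN' : (0 : ℝ) < N := by positivity
  have hsub : Tendsto (fun k : ℕ => N * k + 1) atTop atTop :=
    (tendsto_add_atTop_nat 1).comp (tendsto_id.const_mul_atTop' (Nat.pos_of_ne_zero hN))
  have hinv : Tendsto (fun k : ℕ => (1 : ℝ) / (N * k + 1 : ℕ)) atTop (nhds 0) :=
    tendsto_one_div_atTop_nhds_zero_nat.comp hsub
  have hexp : Tendsto (fun k : ℕ => (N : ℝ)⁻¹ * (1 - 1 / (N * k + 1 : ℕ))) atTop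
      (nhds (N : ℝ)⁻¹) := by
    simpa using (hinv.const_sub 1).const_mul (N : ℝ)⁻¹
  have hbound : Tendsto (fun k : ℕ => C ^ ((1 : ℝ) / (N * k + 1 : ℕ)) *
      q ^ ((N : ℝ)⁻¹ * (1 - 1 / (N * k + 1 : ℕ)))) atTop (nhds (q ^ (N : ℝ)⁻¹)) := by
    have hC_lim := (tendsto_const_nhds (x := C)).rpow hinv (Or.inl hC.ne')
    simpa using hC_lim.mul (tendsto_const_nhds.rpow hexp (Or.inr (inv_pos.2 hN')))
  refine le_of_tendsto_of_tendsto' (hμ.comp hsub) hbound fun k => ?_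
  have hexp_eq : (k : ℝ) * (1 / (N * k + 1 : ℕ)) = (N : ℝ)⁻¹ * (1 - 1 / (N * k + 1 : ℕ)) := by
    push_cast
    field_simp
    ring
  calc f (N * k + 1) ^ ((1 : ℝ) / (N * k + 1 : ℕ))
      ≤ (C * q ^ k) ^ ((1 : ℝ) / (N * k + 1 : ℕ)) :=
        Real.rpow_le_rpow (hf_nonneg _) (hf k) (by positivity)
    _ = C ^ ((1 : ℝ) / (N * k + 1 : ℕ)) * q ^ ((N : ℝ)⁻¹ * (1 - 1 / (N * k + 1 : ℕ))) := by
        rw [Real.mul_rpow hC.le (pow_nonneg hq k), ← Real.rpow_natCast q k, ← Real.rpow_mul hq,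
          hexp_eq]

theorem two_le_degree_of_isCycle {V : Type*} {G : SimpleGraph V} {u : V}
    [Fintype (G.neighborSet u)] {p : G.Walk u u} (hp : p.IsCycle) : 2 ≤ G.degree u := by
  have hnil := hp.not_nil
  exact Finset.one_lt_card.2 ⟨p.snd, (G.mem_neighborFinset u _).2 (p.adj_snd hnil),
    p.penultimate, (G.mem_neighborFinset u _).2 (p.adj_penultimate hnil).symm,
    hp.snd_ne_penultimate⟩

theorem connective_constant_strict_upper_bound_general {V : Type*} (G : SimpleGraph V)
    [G.LocallyFinite] (Δ : ℕ) (hconn : G.Connected) (hdeg : ∀ v : V, G.degree v ≤ Δ)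
    (hqt : ∃ W : Finset V, ∀ v : V, ∃ w ∈ W, ∃ γ : G ≃g G, γ v = w)
    (hcycle : ∃ (u : V) (cyc : G.Walk u u), cyc.IsCycle)
    (v : V) (μ : ℝ)
    (hμ : Tendsto (fun n : ℕ => (sawCount G v n : ℝ) ^ ((1 : ℝ) / n)) atTop (nhds μ)) :
    μ < (Δ : ℝ) - 1 := by
  classical
  have ⟨u, cyc, hcyc⟩ := hcycle
  have hΔ : 2 ≤ Δ := (two_le_degree_of_isCycle hcyc).trans (hdeg u)
  obtain ⟨d, rfl⟩ : ∃ d, Δ = d + 1 := ⟨Δ - 1, by lia⟩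
  have hd : 1 ≤ d := by lia
  obtain ⟨N, hN, hlt⟩ := exists_forall_avoidingSawCount_lt_pow hd hdeg hqt fun a b _ =>
    not_isSaturated_singleton hd hdeg hconn hqt hcycle a b
  have hsaw : ∀ k, sawCount G v (N * k + 1) ≤ (d + 1) * (d ^ N - 1) ^ k := fun k =>
    (sawCount_succ_le (fun _ _ => avoidingSawCount_mul_le_pow
      (fun a b hab => Nat.le_sub_one_of_lt (hlt a b hab)) k) v).trans
      (Nat.mul_le_mul_right _ (hdeg v))
  have hμ_le : μ ≤ ((d ^ N - 1 : ℕ) : ℝ) ^ (N : ℝ)⁻¹ :=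
    le_rpow_inv_of_tendsto_rpow_one_div hN (C := (d + 1 : ℕ)) (by positivity) (Nat.cast_nonneg _)
      (fun n => Nat.cast_nonneg _) (fun k => by exact_mod_cast hsaw k) hμ
  have hroot : ((d ^ N - 1 : ℕ) : ℝ) ^ (N : ℝ)⁻¹ < d := by
    rw [Real.rpow_inv_lt_iff_of_pos (Nat.cast_nonneg _) (Nat.cast_nonneg _) (by positivity),
      Real.rpow_natCast]
    exact_mod_cast Nat.sub_one_lt (Nat.pow_pos hd).ne'
  simpa using hμ_le.trans_lt hroot

/-- For an infinite, connected, quasi-transitive, `Δ`-regular simple graph with `Δ ≥ 2`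
containing a cycle, the connective constant satisfies the strict inequality `μ < Δ − 1`. -/
theorem connective_constant_strict_upper_bound {V : Type*} (G : SimpleGraph V) [Infinite V]
    (Δ : ℕ) (hΔ : 2 ≤ Δ)
    (hconn : G.Connected)
    (hreg : ∀ v : V, (G.neighborSet v).ncard = Δ)
    (hqt : ∃ W : Finset V, ∀ v : V, ∃ w ∈ W, ∃ γ : G ≃g G, γ v = w)
    (hcycle : ∃ (u : V) (cyc : G.Walk u u), cyc.IsCycle)
    (v : V) (μ : ℝ)
    (hμ : Tendsto (fun n : ℕ => (sawCount G v n : ℝ) ^ ((1 : ℝ) / n)) atTop (nhds μ)) :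
    μ < (Δ : ℝ) - 1 := by
  have : G.LocallyFinite := fun x =>
    (Set.finite_of_ncard_ne_zero (by rw [hreg x]; lia)).fintype
  refine connective_constant_strict_upper_bound_general G Δ hconn (fun x => ?_) hqt hcycle v μ hμ
  rw [← hreg x, Set.ncard_eq_toFinset_card']
  exact le_rfl
end

section
/- Let G be an infinite, connected, locally finite, quasi-transitive simple graph, and let v be a vertex. If σ_n(v)^{1/n} → μ as n → ∞, then also σ^F_n(v)^{1/n} → μ as n → ∞; that is, the growth rate of the number of forward-extendable SAWs equals the connective constant. -/
open Filter

/-! Let `σ_n` and `F_n` count the self-avoiding and the forward-extendable walks. Fix `u` and `v`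
and a path from `v` to `u`, and cut every infinite self-avoiding walk from `u` at its last visit to
that path. What follows the cut, glued to the part of the path that leads there from `v`, is an
infinite self-avoiding walk from `v`. So if the cut occurs at time `m`, there are at most
`σ_m(u) F_{k+d}(v)` possibilities for the first `m + k` steps, where `d` is the length of the path.
If `liminf F_n(v)^{1/n} < 1/z`, then choosing a suitable `k` for each `m` yields a cutset of the
infinite walks from `u` whose generating function at `z` is at most `1`. By compactness this cutset
meets every finite self-avoiding walk that is long enough, and splitting off such prefixes bounds
`σ_n(u) z^n` uniformly in `n` and `u`. Hence `limsup σ_n(u)^{1/n} ≤ liminf F_n(v)^{1/n}`. -/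

open scoped ENNReal Topology

section SelfAvoidingWalks

variable {V : Type*} {G : SimpleGraph V}

/-! ### Walks as lists and streams -/

/-- A finite self-avoiding walk from `u`, encoded by the list of its vertices after `u`: leaving out
`u` makes concatenation of walks the concatenation of lists. The endpoint is `l.getLastD u`. -/
def IsSaw (G : SimpleGraph V) (u : V) (l : List V) : Prop :=
  (u :: l).IsChain G.Adj ∧ (u :: l).Nodup

/-- An infinite self-avoiding walk from `u`, encoded by the stream of its vertices after `u`. -/
def IsInfSaw (G : SimpleGraph V) (u : V) (s : Stream' V) : Prop :=
  Function.Injective (Stream'.cons u s).get ∧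
    ∀ i, G.Adj ((Stream'.cons u s).get i) ((Stream'.cons u s).get (i + 1))

/-- The `n`-step self-avoiding walks from `u`, in the encoding of `IsSaw`. -/
def sawSet (G : SimpleGraph V) (u : V) (n : ℕ) : Set (List V) :=
  {l | IsSaw G u l ∧ l.length = n}

/-- The forward-extendable `n`-step self-avoiding walks from `u`, in the encoding of `IsSaw`. -/
def fwdSawSet (G : SimpleGraph V) (u : V) (n : ℕ) : Set (List V) :=
  {l | ∃ s, IsInfSaw G u s ∧ s.take n = l}

theorem isSaw_append {u : V} {l m : List V} :
    IsSaw G u (l ++ m) ↔ IsSaw G u l ∧ IsSaw G (l.getLastD u) m ∧ ∀ x ∈ m, x ∉ u :: l := by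
  have hchain : (u :: (l ++ m)).IsChain G.Adj ↔
      (u :: l).IsChain G.Adj ∧ (l.getLastD u :: m).IsChain G.Adj := by
    induction l generalizing u with
    | nil => simp
    | cons a l ih =>
      rw [List.getLastD_cons, List.cons_append, List.isChain_cons_cons, List.isChain_cons_cons, ih,
        and_assoc]
  have hmem : l.getLastD u ∈ u :: l := List.getLastD_mem_cons
  simp only [IsSaw, hchain]
  grind [List.nodup_append]

theorem IsSaw.of_isPrefix {u : V} {l m : List V} (hm : IsSaw G u m) (hl : l <+: m) :
    IsSaw G u l := by
  obtain ⟨r, rfl⟩ := hl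
  exact (isSaw_append.1 hm).1

theorem isInfSaw_iff_forall_take {u : V} {s : Stream' V} :
    IsInfSaw G u s ↔ ∀ n, IsSaw G u (s.take n) := by
  have hget (n i : ℕ) (hi : i < (u :: s.take n).length) :
      (u :: s.take n)[i] = (Stream'.cons u s).get i :=
    Stream'.take_get i (n + 1) (Stream'.cons u s) (by simpa using hi)
  simp only [IsInfSaw, IsSaw, List.isChain_iff_getElem, List.nodup_iff_injective_getElem, hget]
  constructor
  · rintro ⟨hinj, hadj⟩ n
    exact ⟨fun i _ => hadj i, fun i j hij => Fin.ext (hinj hij)⟩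
  · intro h
    refine ⟨fun i j hij => ?_, fun i => (h (i + 1)).1 i (by simp)⟩
    have hlt (k : ℕ) (hk : k ≤ i + j) : k < (u :: s.take (i + j)).length := by simp; omega
    exact Fin.mk.inj (@(h (i + j)).2 ⟨i, hlt i (by omega)⟩ ⟨j, hlt j (by omega)⟩ hij)

theorem IsInfSaw.take_mem_sawSet {u : V} {s : Stream' V} (hs : IsInfSaw G u s) (n : ℕ) :
    s.take n ∈ sawSet G u n :=
  ⟨isInfSaw_iff_forall_take.1 hs n, Stream'.length_take n s⟩

theorem take_mem_sawSet {u : V} {l : List V} {m n : ℕ} (hl : l ∈ sawSet G u n) (hmn : m ≤ n) :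
    l.take m ∈ sawSet G u m :=
  ⟨hl.1.of_isPrefix (List.take_prefix m l), by rw [List.length_take, hl.2, min_eq_left hmn]⟩

theorem isInfSaw_append {u : V} {l : List V} {s : Stream' V} :
    IsInfSaw G u (l ++ₛ s) ↔
      IsSaw G u l ∧ IsInfSaw G (l.getLastD u) s ∧ ∀ i, s.get i ∉ u :: l := by
  have hmem : (∀ i, s.get i ∉ u :: l) ↔ ∀ n, ∀ x ∈ s.take n, x ∉ u :: l := by
    constructor
    · intro h n x hx
      obtain ⟨i, hi, rfl⟩ := List.mem_iff_getElem.1 hx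
      rw [Stream'.take_get]
      exact h i
    · intro h i
      refine h (i + 1) _ ?_
      rw [Stream'.take_succ']
      exact List.mem_concat_self
  have htake (n : ℕ) : l ++ s.take n = (l ++ₛ s).take (l.length + n) := Stream'.append_take ..
  simp only [isInfSaw_iff_forall_take, hmem]
  constructor
  · intro h
    have happ (n : ℕ) := isSaw_append.1 (htake n ▸ h (l.length + n))
    exact ⟨(happ 0).1, fun n => (happ n).2.1, fun n => (happ n).2.2⟩
  · rintro ⟨hl, hs, hdisj⟩ n
    refine (isSaw_append.2 ⟨hl, hs n, hdisj n⟩).of_isPrefix ?_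
    rw [htake]
    exact (Stream'.take_prefix _ _ _).2 (Nat.le_add_left n l.length)

theorem sawSet_finite (hlf : ∀ v, (G.neighborSet v).Finite) (u : V) (n : ℕ) :
    (sawSet G u n).Finite := by
  induction n generalizing u with
  | zero => exact (Set.finite_singleton []).subset fun l hl => List.length_eq_zero_iff.1 hl.2
  | succ n ih =>
    refine ((hlf u).biUnion fun a _ => (ih a).image (a :: ·)).subset ?_
    rintro (_ | ⟨a, l⟩) ⟨⟨hchain, hnodup⟩, hlen⟩
    · simp at hlen
    · obtain ⟨hadj, hchain⟩ := List.isChain_cons_cons.1 hchain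
      exact Set.mem_biUnion hadj ⟨l, ⟨⟨hchain, hnodup.of_cons⟩, Nat.succ.inj hlen⟩, rfl⟩

theorem fwdSawSet_subset_sawSet (u : V) (n : ℕ) : fwdSawSet G u n ⊆ sawSet G u n := by
  rintro _ ⟨s, hs, rfl⟩
  exact hs.take_mem_sawSet n

theorem support_eq_take_iff {u w : V} (p : G.Walk u w) (s : Stream' V) :
    p.support = s.take (p.length + 1) ↔ ∀ i ≤ p.length, s.get i = p.getVert i := by
  rw [List.ext_getElem_iff]
  simp only [SimpleGraph.Walk.length_support, Stream'.length_take, Stream'.take_get,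
    SimpleGraph.Walk.support_getElem_eq_getVert, Nat.lt_succ_iff, true_and]
  exact ⟨fun h i hi => (h i hi hi).symm, fun h i hi _ => (h i hi).symm⟩

theorem support_tail_mem_fwdSawSet_iff {u w : V} (p : G.Walk u w) :
    p.support.tail ∈ fwdSawSet G u p.length ↔ ∃ f : ℕ → V, Function.Injective f ∧
      (∀ i, G.Adj (f i) (f (i + 1))) ∧ ∀ i ≤ p.length, f i = p.getVert i := by
  constructor
  · rintro ⟨s, hs, hps⟩
    refine ⟨(Stream'.cons u s).get, hs.1, hs.2, (support_eq_take_iff p (Stream'.cons u s)).1 ?_⟩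
    rw [← p.cons_tail_support, Stream'.take_succ_cons, hps]
  · rintro ⟨f, hinj, hadj, hf⟩
    have hsupp : p.support = Stream'.take (p.length + 1) f := (support_eq_take_iff p f).2 hf
    have hcons : Stream'.cons u (Stream'.tail f) = f := by
      rw [← p.getVert_zero, ← hf 0 (Nat.zero_le _)]
      exact Stream'.eta f
    exact ⟨Stream'.tail f, ⟨hcons.symm ▸ hinj, hcons.symm ▸ hadj⟩, congrArg List.tail hsupp.symm⟩

theorem bijOn_support_tail (v : V) (n : ℕ) :
    Set.BijOn (fun p : Σ w, G.Walk v w => p.2.support.tail)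
      {p | p.2.IsPath ∧ p.2.length = n} (sawSet G v n) := by
  refine ⟨?_, ?_, ?_⟩
  · rintro ⟨w, p⟩ ⟨hp, hlen⟩
    exact ⟨⟨p.cons_tail_support.symm ▸ p.isChain_adj_support,
      p.cons_tail_support.symm ▸ hp.support_nodup⟩, by simpa using hlen⟩
  · rintro ⟨w, p⟩ - ⟨w', p'⟩ - h
    have hsupp : p.support = p'.support := by
      rw [← p.cons_tail_support, ← p'.cons_tail_support]
      exact congrArg (v :: ·) h
    obtain rfl : w = w' := by
      rw [← p.getLast_support, ← p'.getLast_support]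
      congr 1
    rw [SimpleGraph.Walk.ext_support hsupp]
  · rintro l ⟨⟨hchain, hnodup⟩, hlen⟩
    have hsupp := SimpleGraph.Walk.support_ofSupport (List.cons_ne_nil v l) hchain
    refine ⟨⟨_, .ofSupport (v :: l) (List.cons_ne_nil v l) hchain⟩, ⟨?_, ?_⟩, ?_⟩
    · exact (SimpleGraph.Walk.isPath_def _).2 (hsupp.symm ▸ hnodup)
    · have := SimpleGraph.Walk.length_support (.ofSupport (v :: l) (List.cons_ne_nil v l) hchain)
      rw [hsupp] at this
      simpa [hlen] using this.symm
    · exact congrArg List.tail hsupp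

theorem sawCount_eq_ncard (v : V) (n : ℕ) : sawCount G v n = (sawSet G v n).ncard :=
  (bijOn_support_tail v n).ncard_eq

theorem fwdSawCount_eq_ncard (v : V) (n : ℕ) : fwdSawCount G v n = (fwdSawSet G v n).ncard := by
  rw [← ((bijOn_support_tail v n).subset_right (fwdSawSet_subset_sawSet v n)).ncard_eq]
  refine congrArg Set.ncard (Set.ext fun p => ?_)
  rw [Set.mem_inter_iff, Set.mem_ofPred_eq, and_assoc]
  refine and_congr_right fun _ => and_congr_right ?_
  rintro rfl
  exact (support_tail_mem_fwdSawSet_iff p.2).symm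

theorem cast_sawCount (hlf : ∀ v, (G.neighborSet v).Finite) (v : V) (n : ℕ) :
    (sawCount G v n : ℝ≥0∞) = (sawSet G v n).encard := by
  rw [sawCount_eq_ncard, ← (sawSet_finite hlf v n).cast_ncard_eq, ENat.toENNReal_coe]

theorem cast_fwdSawCount (hlf : ∀ v, (G.neighborSet v).Finite) (v : V) (n : ℕ) :
    (fwdSawCount G v n : ℝ≥0∞) = (fwdSawSet G v n).encard := by
  rw [fwdSawCount_eq_ncard,
    ← ((sawSet_finite hlf v n).subset (fwdSawSet_subset_sawSet v n)).cast_ncard_eq,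
    ENat.toENNReal_coe]

theorem fwdSawCount_le_sawCount (hlf : ∀ v, (G.neighborSet v).Finite) (v : V) (n : ℕ) :
    fwdSawCount G v n ≤ sawCount G v n := by
  rw [fwdSawCount_eq_ncard, sawCount_eq_ncard]
  exact Set.ncard_le_ncard (fwdSawSet_subset_sawSet v n) (sawSet_finite hlf v n)

theorem fwdSawCount_mono (hlf : ∀ v, (G.neighborSet v).Finite) (v : V) :
    Monotone (fwdSawCount G v) := by
  intro m n hmn
  rw [fwdSawCount_eq_ncard, fwdSawCount_eq_ncard]
  have hfin : (fwdSawSet G v n).Finite :=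
    (sawSet_finite hlf v n).subset (fwdSawSet_subset_sawSet v n)
  refine (Set.ncard_le_ncard (t := List.take m '' fwdSawSet G v n) ?_ (hfin.image _)).trans
    (Set.ncard_image_le hfin)
  rintro _ ⟨s, hs, rfl⟩
  exact ⟨s.take n, ⟨s, hs, rfl⟩, by rw [Stream'.take_take, min_eq_right hmn]⟩

theorem sawCount_le_of_copy (hlf : ∀ v, (G.neighborSet v).Finite) (γ : G.Copy G) (v : V) (n : ℕ) :
    sawCount G v n ≤ sawCount G (γ v) n := by
  rw [sawCount_eq_ncard, sawCount_eq_ncard]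
  refine Set.ncard_le_ncard_of_injOn (List.map γ) ?_ (List.map_injective_iff.2 γ.injective).injOn
    (sawSet_finite hlf _ n)
  rintro l ⟨⟨hchain, hnodup⟩, hlen⟩
  refine ⟨⟨?_, ?_⟩, by simpa using hlen⟩
  · rw [← List.map_cons, List.isChain_map]
    exact hchain.imp fun _ _ => γ.toHom.map_adj
  · rw [← List.map_cons]
    exact hnodup.map γ.injective

/-! ### Cutsets and generating functions -/

/-- A set of finite walks such that every infinite self-avoiding walk from `u` begins with a member
of it. -/
def IsCutset (G : SimpleGraph V) (u : V) (Q : Set (List V)) : Prop :=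
  ∀ s, IsInfSaw G u s → ∃ n, s.take n ∈ Q

/-- The generating function, at `z`, of a set of walks counted by length. -/
noncomputable def genFun (Q : Set (List V)) (z : ℝ≥0∞) : ℝ≥0∞ :=
  ∑' p : Q, z ^ p.1.length

theorem IsCutset.exists_forall_exists_isPrefix (hlf : ∀ v, (G.neighborSet v).Finite) {u : V}
    {Q : Set (List V)} (hQ : IsCutset G u Q) :
    ∃ N, ∀ l ∈ sawSet G u N, ∃ p ∈ Q, p <+: l := by
  by_contra! havoid
  let avoiding (n : ℕ) : Set (List V) := {l | l ∈ sawSet G u n ∧ ∀ p ∈ Q, ¬ p <+: l}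
  have hfin (n : ℕ) : Finite (avoiding n) :=
    ((sawSet_finite hlf u n).subset fun _ hl => hl.1).to_subtype
  have hne (n : ℕ) : Nonempty (avoiding n) := by
    obtain ⟨l, hl, hlQ⟩ := havoid n
    exact ⟨l, hl, hlQ⟩
  let restrict {i j : ℕ} (hij : i ≤ j) (l : avoiding j) : avoiding i :=
    ⟨l.1.take i, take_mem_sawSet l.2.1 hij,
      fun p hp hpl => l.2.2 p hp (hpl.trans (List.take_prefix i l.1))⟩
  obtain ⟨f, hf⟩ := exists_seq_forall_proj_of_forall_finite (α := fun n => avoiding n) restrict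
    (fun i l => Subtype.ext (List.take_of_length_le l.2.1.2.le))
    (fun i j k hij hjk l => Subtype.ext (by simp [restrict, List.take_take, hij]))
    (fun i l => Set.toFinite _)
  have hlen (n : ℕ) : (f n).1.length = n := (f n).2.1.2
  let s : Stream' V := fun n => (f (n + 1)).1[n]'(by rw [hlen]; exact n.lt_succ_self)
  have hs (n : ℕ) : s.take n = (f n).1 := by
    refine List.ext_getElem (by rw [Stream'.length_take, hlen]) fun i hi hi' => ?_
    have hin : i + 1 ≤ n := by rwa [hlen] at hi'
    rw [Stream'.take_get]
    change (f (i + 1)).1[i]'_ = _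
    simp only [← hf hin, restrict, List.getElem_take]
  have hinf : IsInfSaw G u s :=
    isInfSaw_iff_forall_take.2 fun n => hs n ▸ (f n).2.1.1
  obtain ⟨n, hn⟩ := hQ s hinf
  exact (f n).2.2 _ (hs n ▸ hn) List.prefix_rfl

theorem encard_biUnion_le_tsum {α β : Type*} (s : Set α) (t : α → Set β) :
    ((⋃ a ∈ s, t a).encard : ℝ≥0∞) ≤ ∑' a : s, ((t a).encard : ℝ≥0∞) := by
  simpa only [ENNReal.tsum_set_one] using ENNReal.tsum_biUnion_le_tsum (fun _ => 1) s t

theorem cast_encard_mono {α : Type*} {s t : Set α} (h : s ⊆ t) :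
    (s.encard : ℝ≥0∞) ≤ t.encard :=
  ENat.toENNReal_le.2 (Set.encard_le_encard h)

theorem cast_encard_image_le {α β : Type*} (f : α → β) (s : Set α) :
    ((f '' s).encard : ℝ≥0∞) ≤ s.encard :=
  ENat.toENNReal_le.2 (Set.encard_image_le f s)

theorem encard_extensions_le (u : V) (p : List V) (k : ℕ) :
    {l ∈ sawSet G u (p.length + k) | p <+: l}.encard ≤ (sawSet G (p.getLastD u) k).encard := by
  refine (Set.encard_le_encard ?_).trans (Set.encard_image_le (p ++ ·) _)
  rintro _ ⟨⟨hl, hlen⟩, r, rfl⟩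
  rw [List.length_append, Nat.add_left_cancel_iff] at hlen
  exact ⟨r, ⟨(isSaw_append.1 hl).2.1, hlen⟩, rfl⟩

section Counting

variable (hlf : ∀ v, (G.neighborSet v).Finite)
include hlf

/- Decompose each walk at a prefix in `Q`; a prefix `p` leaves a walk of `n - |p|` steps. -/
theorem sawCount_mul_pow_le_genFun_mul {u : V} {n : ℕ} {Q : Set (List V)} {z C : ℝ≥0∞}
    (hQ : ∀ l ∈ sawSet G u n, ∃ p ∈ Q, p <+: l) (hnil : [] ∉ Q)
    (hC : ∀ k < n, ∀ x, sawCount G x k * z ^ k ≤ C) :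
    sawCount G u n * z ^ n ≤ genFun Q z * C := by
  have hextensions (p : Q) :
      ({l ∈ sawSet G u n | p.1 <+: l}.encard : ℝ≥0∞) * z ^ n ≤ z ^ p.1.length * C := by
    rcases Set.eq_empty_or_nonempty {l ∈ sawSet G u n | p.1 <+: l} with hempty | ⟨l, hl, hpl⟩
    · simp [hempty]
    have hpos : 0 < p.1.length := List.length_pos_iff.2 fun h => hnil (h ▸ p.2)
    obtain ⟨k, rfl⟩ := Nat.exists_eq_add_of_le (hl.2 ▸ hpl.length_le)
    calc ({l ∈ sawSet G u (p.1.length + k) | p.1 <+: l}.encard : ℝ≥0∞) * z ^ (p.1.length + k)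
        ≤ sawCount G (p.1.getLastD u) k * z ^ (p.1.length + k) := by
          rw [cast_sawCount hlf]
          exact mul_le_mul' (ENat.toENNReal_le.2 (encard_extensions_le u p.1 k)) le_rfl
      _ = z ^ p.1.length * (sawCount G (p.1.getLastD u) k * z ^ k) := by ring
      _ ≤ z ^ p.1.length * C := by
          gcongr
          exact hC k (by omega) _
  have hcover : sawSet G u n ⊆ ⋃ p ∈ Q, {l ∈ sawSet G u n | p <+: l} := by
    intro l hl
    obtain ⟨p, hp, hpl⟩ := hQ l hl
    exact Set.mem_biUnion hp ⟨hl, hpl⟩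
  calc sawCount G u n * z ^ n
      ≤ (∑' p : Q, ({l ∈ sawSet G u n | p.1 <+: l}.encard : ℝ≥0∞)) * z ^ n := by
        rw [cast_sawCount hlf]
        gcongr
        exact (cast_encard_mono hcover).trans (encard_biUnion_le_tsum Q _)
    _ = ∑' p : Q, ({l ∈ sawSet G u n | p.1 <+: l}.encard : ℝ≥0∞) * z ^ n :=
        ENNReal.tsum_mul_right.symm
    _ ≤ ∑' p : Q, z ^ p.1.length * C := ENNReal.tsum_le_tsum hextensions
    _ = genFun Q z * C := ENNReal.tsum_mul_right

theorem exists_sawCount_mul_pow_le {W : Finset V}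
    (hW : ∀ v, ∃ w ∈ W, ∀ n, sawCount G v n ≤ sawCount G w n) {z : ℝ≥0∞} (hz : z ≠ ⊤)
    (hcut : ∀ u, ∃ Q, IsCutset G u Q ∧ [] ∉ Q ∧ genFun Q z ≤ 1) :
    ∃ C ≠ ⊤, ∀ n u, sawCount G u n * z ^ n ≤ C := by
  choose Q hQ hnil hweight using hcut
  choose N hN using fun u => (hQ u).exists_forall_exists_isPrefix hlf
  let C : ℝ≥0∞ := ∑ w ∈ W, ∑ n ∈ Finset.range (N w), sawCount G w n * z ^ n
  have hC_top : C ≠ ⊤ := ENNReal.sum_ne_top.2 fun w _ => ENNReal.sum_ne_top.2 fun n _ =>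
    ENNReal.mul_ne_top (ENNReal.natCast_ne_top _) (ENNReal.pow_ne_top hz)
  refine ⟨C, hC_top, fun n => ?_⟩
  induction n using Nat.strong_induction_on with
  | _ n ih =>
  intro u
  obtain ⟨w, hw, hle⟩ := hW u
  have huw : (sawCount G u n * z ^ n : ℝ≥0∞) ≤ sawCount G w n * z ^ n := by
    gcongr
    exact hle n
  refine huw.trans ?_
  rcases lt_or_ge n (N w) with hn | hn
  · calc (sawCount G w n * z ^ n : ℝ≥0∞)
        ≤ ∑ n ∈ Finset.range (N w), sawCount G w n * z ^ n :=
          Finset.single_le_sum_of_canonicallyOrdered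
            (f := fun n => (sawCount G w n * z ^ n : ℝ≥0∞)) (Finset.mem_range.2 hn)
      _ ≤ C := Finset.single_le_sum_of_canonicallyOrdered
            (f := fun w => ∑ n ∈ Finset.range (N w), (sawCount G w n * z ^ n : ℝ≥0∞)) hw
  · have hbegins : ∀ l ∈ sawSet G w n, ∃ p ∈ Q w, p <+: l := by
      intro l hl
      obtain ⟨p, hp, hpl⟩ := hN w _ (take_mem_sawSet hl hn)
      exact ⟨p, hp, hpl.trans (List.take_prefix _ l)⟩
    calc (sawCount G w n * z ^ n : ℝ≥0∞) ≤ genFun (Q w) z * C :=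
          sawCount_mul_pow_le_genFun_mul hlf hbegins (hnil w) ih
      _ ≤ C := mul_le_of_le_one_left' (hweight w)

end Counting

theorem genFun_of_forall_length_eq {Q : Set (List V)} {n : ℕ} (hQ : ∀ p ∈ Q, p.length = n)
    (z : ℝ≥0∞) : genFun Q z = Q.encard * z ^ n := by
  rw [← ENNReal.tsum_set_const]
  exact tsum_congr fun p => by rw [hQ p p.2]

/-! ### Cutting at the last visit to a finite set -/

theorem getLastD_take (u : V) (s : Stream' V) (m : ℕ) :
    (s.take m).getLastD u = (Stream'.cons u s).get m := by
  cases m with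
  | zero => rfl
  | succ m => rw [Stream'.take_succ', List.getLastD_concat]; rfl

theorem IsInfSaw.exists_last_visit {u : V} {s : Stream' V} (hs : IsInfSaw G u s) {P : Set V}
    (hP : P.Finite) (hu : u ∈ P) :
    ∃ m, (s.take m).getLastD u ∈ P ∧ ∀ i, (s.drop m).get i ∉ P := by
  obtain ⟨m, hm, hmax⟩ := (hP.preimage hs.1.injOn).exists_maximal ⟨0, hu⟩
  refine ⟨m, (getLastD_take u s m).symm ▸ hm, fun i hi => ?_⟩
  rw [Stream'.get_drop] at hi
  have hle : m + i + 1 ≤ m := hmax (y := m + i + 1) hi (show m ≤ m + i + 1 by omega)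
  omega

theorem exists_prefix_getLastD_eq {v x : V} {p : List V} (hx : x ∈ v :: p) :
    ∃ q, q <+: p ∧ q.getLastD v = x := by
  rcases List.mem_cons.1 hx with rfl | hx
  · exact ⟨[], List.nil_prefix, rfl⟩
  · obtain ⟨q, r, rfl⟩ := List.append_of_mem hx
    exact ⟨q ++ [x], ⟨r, by simp⟩, List.getLastD_concat⟩

/-- The `n`-step initial segments of the infinite self-avoiding walks from `x` that never visit `P`
after time `0`. -/
def escapeSet (G : SimpleGraph V) (P : Set V) (x : V) (n : ℕ) : Set (List V) :=
  {l | ∃ s, IsInfSaw G x s ∧ (∀ i, s.get i ∉ P) ∧ s.take n = l}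

/-- The walks from `u` made of `m` steps ending in `P`, followed by the first `k` steps of an
infinite walk that avoids `P` from then on. -/
def lastVisitSet (G : SimpleGraph V) (P : Set V) (u : V) (m k : ℕ) : Set (List V) :=
  ⋃ w ∈ {w ∈ sawSet G u m | w.getLastD u ∈ P}, (w ++ ·) '' escapeSet G P (w.getLastD u) k

theorem length_of_mem_lastVisitSet {P : Set V} {u : V} {m k : ℕ} {l : List V}
    (hl : l ∈ lastVisitSet G P u m k) : l.length = m + k := by
  obtain ⟨w, ⟨hw, -⟩, _, ⟨s, -, -, rfl⟩, rfl⟩ := Set.mem_iUnion₂.1 hl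
  rw [List.length_append, hw.2, Stream'.length_take]

theorem isCutset_iUnion_lastVisitSet {P : Set V} (hP : P.Finite) {u : V} (hu : u ∈ P) (k : ℕ → ℕ) :
    IsCutset G u (⋃ m, lastVisitSet G P u m (k m)) := by
  intro s hs
  obtain ⟨m, hm, hescape⟩ := hs.exists_last_visit hP hu
  have hsplit : IsInfSaw G u (s.take m ++ₛ s.drop m) := by rwa [Stream'.append_take_drop]
  obtain ⟨-, hdrop, -⟩ := isInfSaw_append.1 hsplit
  refine ⟨m + k m, Set.mem_iUnion.2 ⟨m, Set.mem_biUnion ⟨hs.take_mem_sawSet m, hm⟩ ?_⟩⟩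
  exact ⟨_, ⟨s.drop m, hdrop, hescape, rfl⟩, (Stream'.take_add ..).symm⟩

/- An escape from a vertex `x` of the path `p` is glued to the part of `p` from `v` to `x`. -/
theorem encard_escapeSet_le (hlf : ∀ v, (G.neighborSet v).Finite) {v x : V} {p : List V}
    (hp : IsSaw G v p) (hx : x ∈ v :: p) (k : ℕ) :
    ((escapeSet G {y | y ∈ v :: p} x k).encard : ℝ≥0∞) ≤ fwdSawCount G v (k + p.length) := by
  obtain ⟨q, hqp, rfl⟩ := exists_prefix_getLastD_eq hx
  have hglue : (q ++ ·) '' escapeSet G {y | y ∈ v :: p} (q.getLastD v) k ⊆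
      fwdSawSet G v (k + q.length) := by
    rintro _ ⟨_, ⟨s, hs, hescape, rfl⟩, rfl⟩
    refine ⟨q ++ₛ s, isInfSaw_append.2 ⟨hp.of_isPrefix hqp, hs, fun i hi => hescape i ?_⟩, ?_⟩
    · exact List.cons_subset_cons v hqp.subset hi
    · rw [add_comm, ← Stream'.append_take]
  calc ((escapeSet G {y | y ∈ v :: p} (q.getLastD v) k).encard : ℝ≥0∞)
      = ((q ++ ·) '' escapeSet G {y | y ∈ v :: p} (q.getLastD v) k).encard := by
        rw [(List.append_right_injective q).encard_image]
    _ ≤ fwdSawCount G v (k + q.length) := by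
        rw [cast_fwdSawCount hlf]
        exact cast_encard_mono hglue
    _ ≤ fwdSawCount G v (k + p.length) := by
        exact_mod_cast fwdSawCount_mono hlf v (Nat.add_le_add_left hqp.length_le k)

theorem encard_lastVisitSet_le (hlf : ∀ v, (G.neighborSet v).Finite) {P : Set V} {k : ℕ}
    {K : ℝ≥0∞} (hK : ∀ x ∈ P, (escapeSet G P x k).encard ≤ K) (u : V) (m : ℕ) :
    ((lastVisitSet G P u m k).encard : ℝ≥0∞) ≤ sawCount G u m * K := by
  let visiting := {w ∈ sawSet G u m | w.getLastD u ∈ P}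
  calc ((lastVisitSet G P u m k).encard : ℝ≥0∞)
      ≤ ∑' w : visiting, (((w.1 ++ ·) '' escapeSet G P (w.1.getLastD u) k).encard : ℝ≥0∞) :=
        encard_biUnion_le_tsum visiting _
    _ ≤ ∑' _ : visiting, K :=
        ENNReal.tsum_le_tsum fun w => (cast_encard_image_le _ _).trans (hK _ w.2.2)
    _ = visiting.encard * K := ENNReal.tsum_set_const visiting K
    _ ≤ sawCount G u m * K := by
        rw [cast_sawCount hlf]
        gcongr
        exact Set.sep_subset _ _

theorem exists_pos_mul_pow_le {f : ℕ → ℝ≥0∞} {r z c ε : ℝ≥0∞} (hr : r ≠ ⊤) (hrz : r * z < 1)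
    (hc : c ≠ ⊤) (hε : ε ≠ 0) (hf : ∃ᶠ n in atTop, f n ≤ r ^ n) (d : ℕ) :
    ∃ k, 0 < k ∧ c * f (k + d) * z ^ k ≤ ε := by
  have hlim : Tendsto (fun k : ℕ => c * r ^ d * (r * z) ^ k) atTop (𝓝 0) := by
    simpa only [mul_zero] using
      ENNReal.Tendsto.const_mul (ENNReal.tendsto_pow_atTop_nhds_zero_of_lt_one hrz)
        (Or.inr (ENNReal.mul_ne_top hc (ENNReal.pow_ne_top hr)))
  rw [← map_add_atTop_eq_nat d, frequently_map] at hf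
  obtain ⟨k, hfk, hk, hpos⟩ := (hf.and_eventually
    ((hlim.eventually_lt_const (pos_iff_ne_zero.2 hε)).and (eventually_gt_atTop 0))).exists
  refine ⟨k, hpos, ?_⟩
  calc c * f (k + d) * z ^ k ≤ c * r ^ (k + d) * z ^ k := by gcongr
    _ = c * r ^ d * (r * z) ^ k := by ring
    _ ≤ ε := hk.le

theorem exists_isSaw_getLastD_eq (hconn : G.Connected) (v u : V) :
    ∃ p, IsSaw G v p ∧ p.getLastD v = u := by
  obtain ⟨p, hp⟩ := (hconn.preconnected v u).exists_isPath
  refine ⟨p.support.tail, ((bijOn_support_tail v p.length).mapsTo (x := ⟨u, p⟩) ⟨hp, rfl⟩).1, ?_⟩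
  rw [← List.getLast_eq_getLastD (List.cons_ne_nil v p.support.tail)]
  simp only [p.cons_tail_support, p.getLast_support]

theorem exists_isCutset_genFun_le_one (hconn : G.Connected) (hlf : ∀ v, (G.neighborSet v).Finite)
    (u v : V) {r z : ℝ≥0∞} (hr : r ≠ ⊤) (hz : z ≠ ⊤) (hrz : r * z < 1)
    (hf : ∃ᶠ n in atTop, (fwdSawCount G v n : ℝ≥0∞) ≤ r ^ n) :
    ∃ Q, IsCutset G u Q ∧ [] ∉ Q ∧ genFun Q z ≤ 1 := by
  obtain ⟨p, hp, hpu⟩ := exists_isSaw_getLastD_eq hconn v u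
  let P : Set V := {y | y ∈ v :: p}
  have hu : u ∈ P := hpu ▸ List.getLastD_mem_cons
  have hfactor (m : ℕ) : (sawCount G u m : ℝ≥0∞) * z ^ m ≠ ⊤ :=
    ENNReal.mul_ne_top (ENNReal.natCast_ne_top _) (ENNReal.pow_ne_top hz)
  choose k hpos hk using fun m =>
    exists_pos_mul_pow_le hr hrz (hfactor m) (ε := 2⁻¹ ^ (m + 1)) (by simp) hf p.length
  have hweight (m : ℕ) : genFun (lastVisitSet G P u m (k m)) z ≤ 2⁻¹ ^ (m + 1) := by
    calc genFun (lastVisitSet G P u m (k m)) z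
        = (lastVisitSet G P u m (k m)).encard * z ^ (m + k m) :=
          genFun_of_forall_length_eq (fun _ => length_of_mem_lastVisitSet) z
      _ ≤ sawCount G u m * fwdSawCount G v (k m + p.length) * z ^ (m + k m) := by
          gcongr
          exact encard_lastVisitSet_le hlf (fun x hx => encard_escapeSet_le hlf hp hx _) u m
      _ = sawCount G u m * z ^ m * fwdSawCount G v (k m + p.length) * z ^ k m := by ring
      _ ≤ 2⁻¹ ^ (m + 1) := hk m
  refine ⟨_, isCutset_iUnion_lastVisitSet (List.finite_toSet _) hu k, ?_, ?_⟩
  · intro hnil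
    obtain ⟨m, hm⟩ := Set.mem_iUnion.1 hnil
    have hlen : 0 = m + k m := length_of_mem_lastVisitSet hm
    exact (Nat.add_pos_right m (hpos m)).ne hlen
  · calc genFun (⋃ m, lastVisitSet G P u m (k m)) z
        ≤ ∑' m, genFun (lastVisitSet G P u m (k m)) z := 
          ENNReal.tsum_iUnion_le_tsum (fun l : List V => z ^ l.length) _
      _ ≤ ∑' m : ℕ, 2⁻¹ ^ (m + 1) := ENNReal.tsum_le_tsum hweight
      _ = 1 := by
          rw [ENNReal.tsum_geometric_add_one, ENNReal.one_sub_inv_two, inv_inv]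
          exact ENNReal.inv_mul_cancel two_ne_zero ENNReal.ofNat_ne_top

/-! ### Growth rates -/

theorem limsup_rpow_le_inv {a : ℕ → ℝ≥0∞} {z C : ℝ≥0∞} (hz : z ≠ ⊤) (hC : C ≠ ⊤)
    (ha : ∀ n, a n * z ^ n ≤ C) : limsup (fun n : ℕ => a n ^ ((1 : ℝ) / n)) atTop ≤ z⁻¹ := by
  refine le_of_forall_gt_imp_ge_of_dense fun b hb => limsup_le_of_le ?_ ?_
  · exact isCobounded_le_of_bot
  have hz0 : z ≠ 0 := by
    rintro rfl
    simp at hb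
  have hbz : 1 < b * z := by
    rwa [← ENNReal.div_lt_iff (Or.inl hz0) (Or.inl hz), one_div]
  filter_upwards [(ENNReal.tendsto_pow_atTop_nhds_top_iff.2 hbz).eventually_const_le
    (lt_top_iff_ne_top.2 hC), eventually_gt_atTop 0] with n hCn hn
  have han : a n ≤ b ^ n := by
    rw [← ENNReal.mul_le_mul_iff_left (pow_ne_zero n hz0) (ENNReal.pow_ne_top hz), ← mul_pow]
    exact (ha n).trans hCn
  rwa [one_div, ENNReal.rpow_inv_le_iff (Nat.cast_pos.2 hn), ENNReal.rpow_natCast]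

theorem frequently_le_pow_of_liminf_rpow_lt {a : ℕ → ℝ≥0∞} {r : ℝ≥0∞}
    (ha : liminf (fun n : ℕ => a n ^ ((1 : ℝ) / n)) atTop < r) : ∃ᶠ n in atTop, a n ≤ r ^ n := by
  refine ((frequently_lt_of_liminf_lt (by isBoundedDefault) ha).and_eventually
    (eventually_gt_atTop 0)).mono fun n ⟨han, hn⟩ => ?_
  rw [← ENNReal.rpow_natCast, ← ENNReal.rpow_inv_le_iff (Nat.cast_pos.2 hn), ← one_div]
  exact han.le

section GrowthRate

variable {W : Finset V} (hlf : ∀ v, (G.neighborSet v).Finite)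
  (hW : ∀ v, ∃ w ∈ W, ∀ n, sawCount G v n ≤ sawCount G w n)
include hlf hW

theorem limsup_sawCount_lt_top (v : V) :
    limsup (fun n : ℕ => (sawCount G v n : ℝ≥0∞) ^ ((1 : ℝ) / n)) atTop < ⊤ := by
  let D : ℕ := ∑ w ∈ W, sawCount G w 1
  have hstep (u : V) : sawCount G u 1 ≤ D + 1 := by
    obtain ⟨w, hw, hle⟩ := hW u
    exact (hle 1).trans (Nat.le_succ_of_le
      (Finset.single_le_sum_of_canonicallyOrdered (f := fun w => sawCount G w 1) hw))
  have hz : ((D + 1 : ℕ) : ℝ≥0∞)⁻¹ ≠ ⊤ := by simp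
  obtain ⟨C, hC, hle⟩ := exists_sawCount_mul_pow_le hlf hW hz fun u => by
    refine ⟨sawSet G u 1, fun s hs => ⟨1, hs.take_mem_sawSet 1⟩, fun h => by simpa using h.2, ?_⟩
    rw [genFun_of_forall_length_eq (fun _ hp => hp.2), ← cast_sawCount hlf, pow_one,
      ← div_eq_mul_inv]
    exact ENNReal.div_le_of_le_mul (by rw [one_mul]; exact_mod_cast hstep u)
  refine (limsup_rpow_le_inv hz hC fun n => hle n v).trans_lt ?_
  rw [inv_inv]
  exact ENNReal.natCast_lt_top _

theorem limsup_sawCount_le_liminf_fwdSawCount (hconn : G.Connected) (u v : V) :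
    limsup (fun n : ℕ => (sawCount G u n : ℝ≥0∞) ^ ((1 : ℝ) / n)) atTop ≤
      liminf (fun n : ℕ => (fwdSawCount G v n : ℝ≥0∞) ^ ((1 : ℝ) / n)) atTop := by
  refine le_of_forall_gt_imp_ge_of_dense fun b hb => ?_
  obtain ⟨r, hr, hrb⟩ := exists_between hb
  have hz : b⁻¹ ≠ ⊤ := ENNReal.inv_ne_top.2 (pos_of_gt hb).ne'
  have hrz : r * b⁻¹ < 1 := by
    rw [← div_eq_mul_inv]
    exact ENNReal.div_lt_of_lt_mul (by rwa [one_mul])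
  have hf := frequently_le_pow_of_liminf_rpow_lt hr
  obtain ⟨C, hC, hle⟩ := exists_sawCount_mul_pow_le hlf hW hz fun x =>
    exists_isCutset_genFun_le_one hconn hlf x v hrb.ne_top hz hrz hf
  exact (limsup_rpow_le_inv hz hC fun n => hle n u).trans_eq (inv_inv b)

theorem forward_extendable_growth_rate_general (hconn : G.Connected) :
    ∃ μ : ℝ, ∀ v,
      Tendsto (fun n : ℕ => (sawCount G v n : ℝ) ^ ((1 : ℝ) / n)) atTop (𝓝 μ) ∧
      Tendsto (fun n : ℕ => (fwdSawCount G v n : ℝ) ^ ((1 : ℝ) / n)) atTop (𝓝 μ) := by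
  obtain ⟨o⟩ := hconn.nonempty
  let saw (v : V) (n : ℕ) : ℝ≥0∞ := (sawCount G v n : ℝ≥0∞) ^ ((1 : ℝ) / n)
  let fwd (v : V) (n : ℕ) : ℝ≥0∞ := (fwdSawCount G v n : ℝ≥0∞) ^ ((1 : ℝ) / n)
  let μ : ℝ≥0∞ := limsup (saw o) atTop
  have hcross (u v : V) : limsup (saw u) atTop ≤ liminf (fwd v) atTop :=
    limsup_sawCount_le_liminf_fwdSawCount hlf hW hconn u v
  have hfwd_le (v : V) : fwd v ≤ saw v := fun n =>
    ENNReal.rpow_le_rpow (mod_cast fwdSawCount_le_sawCount hlf v n) (by positivity)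
  have hliminf_le (v : V) : liminf (fwd v) atTop ≤ liminf (saw v) atTop :=
    liminf_le_liminf (.of_forall (hfwd_le v))
  have hlimsup_saw (v : V) : limsup (saw v) atTop ≤ μ :=
    (hcross v o).trans ((hliminf_le o).trans liminf_le_limsup)
  have hlimsup_fwd (v : V) : limsup (fwd v) atTop ≤ μ :=
    (limsup_le_limsup (.of_forall (hfwd_le v))).trans (hlimsup_saw v)
  have hsaw (v : V) : Tendsto (saw v) atTop (𝓝 μ) :=
    tendsto_of_le_liminf_of_limsup_le ((hcross o v).trans (hliminf_le v)) (hlimsup_saw v)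
  have hfwd (v : V) : Tendsto (fwd v) atTop (𝓝 μ) :=
    tendsto_of_le_liminf_of_limsup_le (hcross o v) (hlimsup_fwd v)
  have hμ : μ ≠ ⊤ := (limsup_sawCount_lt_top hlf hW o).ne
  refine ⟨μ.toReal, fun v => ⟨?_, ?_⟩⟩
  · simpa only [saw, Function.comp_def, ← ENNReal.toReal_rpow, ENNReal.toReal_natCast] using
      (ENNReal.tendsto_toReal hμ).comp (hsaw v)
  · simpa only [fwd, Function.comp_def, ← ENNReal.toReal_rpow, ENNReal.toReal_natCast] using
      (ENNReal.tendsto_toReal hμ).comp (hfwd v)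

end GrowthRate

end SelfAvoidingWalks

/-- For an infinite, connected, locally finite, quasi-transitive simple graph, the growth
rate of the number of forward-extendable SAWs equals the connective constant. -/
theorem forward_extendable_growth_rate {V : Type*} (G : SimpleGraph V) [Infinite V]
    (hconn : G.Connected)
    (hlf : ∀ v : V, (G.neighborSet v).Finite)
    (hqt : ∃ W : Finset V, ∀ v : V, ∃ w ∈ W, ∃ γ : G ≃g G, γ v = w)
    (v : V) (μ : ℝ)
    (hμ : Tendsto (fun n : ℕ => (sawCount G v n : ℝ) ^ ((1 : ℝ) / n)) atTop (nhds μ)) :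
    Tendsto (fun n : ℕ => (fwdSawCount G v n : ℝ) ^ ((1 : ℝ) / n)) atTop (nhds μ) := by
  obtain ⟨W, hW⟩ := hqt
  have hdom (u : V) : ∃ w ∈ W, ∀ n, sawCount G u n ≤ sawCount G w n := by
    obtain ⟨_, hw, γ, rfl⟩ := hW u
    exact ⟨_, hw, sawCount_le_of_copy hlf γ.toCopy u⟩
  obtain ⟨ν, hν⟩ := forward_extendable_growth_rate_general hlf hdom hconn
  exact tendsto_nhds_unique hμ (hν v).1 ▸ (hν v).2
end

section
/- Let 𝕃 be the ladder graph: the simple graph with vertex set ℤ × {0,1} in which (m,a) and (n,b) are adjacent if and only if either a = b and |m − n| = 1, or m = n and a ≠ b. Then for every vertex v of 𝕃, σ_n(v)^{1/n} → (1 + √5)/2 as n → ∞; that is, the connective constant of the ladder is the golden mean. -/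
open Filter

/-- The ladder graph: vertex set `ℤ × {0,1}`, with `(m,a)` and `(n,b)` adjacent iff
either `a = b` and `|m − n| = 1`, or `m = n` and `a ≠ b`. -/
def ladder : SimpleGraph (ℤ × Bool) :=
  SimpleGraph.fromRel (fun x y =>
    (x.2 = y.2 ∧ |x.1 - y.1| = 1) ∨ (x.1 = y.1 ∧ x.2 ≠ y.2))

/-!
Let `c n S v` be the number of `n`-step self-avoiding walks from `v` that avoid `S`. Splitting off
the first step gives `c (n + 1) S v = ∑ c n (insert v S) w` over the neighbours `w` of `v ∉ S`.
Walks that never step to the left are counted by Fibonacci numbers, which is the lower bound. For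
the upper bound, a self-avoiding walk starts along one rail, may return once along the other rail
beside its own trail, then progresses in one direction only, and may finally turn back into the
pocket enclosed by its trail, where it has no choice left. The progressing phase dominates: the
number `P n` of its continuations satisfies `P (n + 2) ≤ P (n + 1) + P n + 1`, the `1` being the
dead end, so `P n < fib (n + 3)`.
-/

section AvoidingWalks

variable {V : Type*} (G : SimpleGraph V)

/-- The `n`-step self-avoiding walks in `G` from `v` that visit no vertex of `S`, where `S` is
meant to be the set of vertices already visited; there are none if `v ∈ S`. -/
abbrev AvoidingSAW (S : Set V) (v : V) (n : ℕ) : Type _ :=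
  {p : Σ w : V, G.Walk v w // p.2.IsPath ∧ p.2.length = n ∧ ∀ u ∈ p.2.support, u ∉ S}

/-- The number of `n`-step self-avoiding walks in `G` from `v` that visit no vertex of `S`. -/
noncomputable def sawCountAvoiding (S : Set V) (v : V) (n : ℕ) : ℕ :=
  Nat.card (AvoidingSAW G S v n)

theorem sawCountAvoiding_empty (v : V) (n : ℕ) : sawCountAvoiding G ∅ v n = sawCount G v n := by
  simp [sawCountAvoiding, AvoidingSAW, sawCount]

variable {G} {S : Set V} {v : V}

theorem AvoidingSAW.start_notMem {n : ℕ} (p : AvoidingSAW G S v n) : v ∉ S :=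
  p.2.2.2 v p.1.2.start_mem_support

theorem sawCountAvoiding_of_mem (hv : v ∈ S) (n : ℕ) : sawCountAvoiding G S v n = 0 :=
  have : IsEmpty (AvoidingSAW G S v n) := ⟨fun p ↦ p.start_notMem hv⟩
  Nat.card_of_isEmpty

theorem AvoidingSAW.eq_nil (p : AvoidingSAW G S v 0) : p.1 = ⟨v, .nil⟩ := by
  obtain ⟨⟨_, p⟩, -, hlen, -⟩ := p
  cases p with
  | nil => rfl
  | cons => simp at hlen

instance : Subsingleton (AvoidingSAW G S v 0) :=
  ⟨fun p q ↦ Subtype.ext (p.eq_nil.trans q.eq_nil.symm)⟩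

theorem sawCountAvoiding_zero_le_one : sawCountAvoiding G S v 0 ≤ 1 :=
  Finite.card_le_one_iff_subsingleton.2 inferInstance

theorem sawCountAvoiding_zero (hv : v ∉ S) : sawCountAvoiding G S v 0 = 1 :=
  have : Nonempty (AvoidingSAW G S v 0) := ⟨⟨v, .nil⟩, by simpa using hv⟩
  Nat.card_unique

theorem cons_isPath_avoiding_iff {w z : V} (hv : v ∉ S) (hadj : G.Adj v w) (p : G.Walk w z)
    (n : ℕ) :
    ((p.cons hadj).IsPath ∧ (p.cons hadj).length = n + 1 ∧ ∀ u ∈ (p.cons hadj).support, u ∉ S) ↔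
      p.IsPath ∧ p.length = n ∧ ∀ u ∈ p.support, u ∉ insert v S := by
  simp only [SimpleGraph.Walk.cons_isPath_iff, SimpleGraph.Walk.length_cons,
    SimpleGraph.Walk.support_cons, List.mem_cons, Set.mem_insert_iff]
  grind

/-- Prepending `v` to the self-avoiding walks that start at a neighbour of `v` and avoid `v`. -/
def AvoidingSAW.consEquiv (hv : v ∉ S) (n : ℕ) :
    (Σ w : G.neighborSet v, AvoidingSAW G (insert v S) w n) ≃ AvoidingSAW G S v (n + 1) where
  toFun q := ⟨⟨q.2.1.1, .cons q.1.2 q.2.1.2⟩,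
    (cons_isPath_avoiding_iff hv q.1.2 q.2.1.2 n).2 q.2.2⟩
  invFun
    | ⟨⟨_, .nil⟩, h⟩ => absurd h.2.1 (Nat.succ_ne_zero n).symm
    | ⟨⟨z, .cons hadj p⟩, h⟩ => ⟨⟨_, hadj⟩, ⟨z, p⟩, (cons_isPath_avoiding_iff hv hadj p n).1 h⟩
  left_inv _ := rfl
  right_inv := by
    rintro ⟨⟨_, _ | _⟩, h⟩
    · exact absurd h.2.1 (Nat.succ_ne_zero n).symm
    · rfl

variable (G S v)

instance AvoidingSAW.finite [G.LocallyFinite] (n : ℕ) : Finite (AvoidingSAW G S v n) := by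
  induction n generalizing S v with
  | zero => infer_instance
  | succ n ih =>
    by_cases hv : v ∈ S
    · exact @Finite.of_subsingleton _ ⟨fun p ↦ absurd hv p.start_notMem⟩
    · exact Finite.of_equiv _ (consEquiv hv n)

variable {S v}

theorem sawCountAvoiding_succ_eq_sum [G.LocallyFinite] (hv : v ∉ S) (n : ℕ) :
    sawCountAvoiding G S v (n + 1) =
      ∑ w ∈ G.neighborFinset v, sawCountAvoiding G (insert v S) w n := by
  rw [sawCountAvoiding, ← Nat.card_congr (AvoidingSAW.consEquiv hv n), Nat.card_sigma]
  exact (Finset.sum_subtype _ (by simp) (sawCountAvoiding G (insert v S) · n)).symm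

end AvoidingWalks

namespace ladder

theorem adj_iff (d : ℤˣ) (x : ℤ) (a : Bool) (w : ℤ × Bool) :
    ladder.Adj (x, a) w ↔ w = (x + d, a) ∨ w = (x - d, a) ∨ w = (x, !a) := by
  obtain ⟨y, b⟩ := w
  rcases Int.units_eq_one_or d with rfl | rfl <;> cases a <;> cases b <;>
    simp [ladder, abs_eq] <;> omega

noncomputable instance : ladder.LocallyFinite := fun v ↦
  Fintype.ofFinset {(v.1 + 1, v.2), (v.1 - 1, v.2), (v.1, !v.2)} fun w ↦ by
    simp [adj_iff 1]

theorem sawCountAvoiding_succ (d : ℤˣ) {S : Set (ℤ × Bool)} {x : ℤ} {a : Bool} (h : (x, a) ∉ S)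
    (n : ℕ) :
    sawCountAvoiding ladder S (x, a) (n + 1) =
      sawCountAvoiding ladder (insert (x, a) S) (x + d, a) n +
      sawCountAvoiding ladder (insert (x, a) S) (x - d, a) n +
      sawCountAvoiding ladder (insert (x, a) S) (x, !a) n := by
  have neighborFinset_eq :
      ladder.neighborFinset (x, a) = {(x + (d : ℤ), a), (x - (d : ℤ), a), (x, !a)} := by
    ext w
    simp [adj_iff d]
  have hd : (d : ℤ) ≠ 0 := d.ne_zero
  rw [sawCountAvoiding_succ_eq_sum ladder h, neighborFinset_eq, Finset.sum_insert,
    Finset.sum_pair, add_assoc]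
  · simp
  · simp
    omega

theorem sawCountAvoiding_succ_le (d : ℤˣ) (S : Set (ℤ × Bool)) (x : ℤ) (a : Bool) (n : ℕ) :
    sawCountAvoiding ladder S (x, a) (n + 1) ≤
      sawCountAvoiding ladder (insert (x, a) S) (x + d, a) n +
      sawCountAvoiding ladder (insert (x, a) S) (x - d, a) n +
      sawCountAvoiding ladder (insert (x, a) S) (x, !a) n := by
  by_cases h : (x, a) ∈ S
  · simp [sawCountAvoiding_of_mem h]
  · exact (sawCountAvoiding_succ d h n).le

theorem sawCountAvoiding_add_two_le (d : ℤˣ) (S : Set (ℤ × Bool)) (x : ℤ) (a : Bool) (n : ℕ) :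
    sawCountAvoiding ladder S (x, a) (n + 2) ≤
      sawCountAvoiding ladder (insert (x, a) S) (x + d, a) (n + 1) +
      sawCountAvoiding ladder (insert (x, a) S) (x - d, a) (n + 1) +
      (sawCountAvoiding ladder (insert (x, !a) (insert (x, a) S)) (x + d, !a) n +
      sawCountAvoiding ladder (insert (x, !a) (insert (x, a) S)) (x - d, !a) n) := by
  have hcross := sawCountAvoiding_succ_le d (insert (x, a) S) x (!a) n
  rw [sawCountAvoiding_of_mem (v := (x, !!a)) (by simp)] at hcross
  exact (sawCountAvoiding_succ_le d S x a (n + 1)).trans (by gcongr; simpa using hcross)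

section UpperBound

-- `S` is the set of visited vertices and `d` the current direction of travel.
variable {S : Set (ℤ × Bool)} {x : ℤ} {a : Bool} {d : ℤˣ}

theorem sawCountAvoiding_one_le_two (h : (x - (d : ℤ), a) ∈ S) :
    sawCountAvoiding ladder S (x, a) 1 ≤ 2 := by
  have hstep := sawCountAvoiding_succ_le d S x a 0
  rw [sawCountAvoiding_of_mem (v := (x - (d : ℤ), a)) (by simp [h])] at hstep
  exact hstep.trans (Nat.add_le_add sawCountAvoiding_zero_le_one sawCountAvoiding_zero_le_one)

theorem sawCountAvoiding_succ_le_of_forced (hbehind : (x - (d : ℤ), a) ∈ S)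
    (hopposite : (x, !a) ∈ S) (n : ℕ) :
    sawCountAvoiding ladder S (x, a) (n + 1) ≤
      sawCountAvoiding ladder (insert (x, a) S) (x + d, a) n := by
  have hstep := sawCountAvoiding_succ_le d S x a n
  rwa [sawCountAvoiding_of_mem (v := (x - (d : ℤ), a)) (by simp [hbehind]),
    sawCountAvoiding_of_mem (v := (x, !a)) (by simp [hopposite])] at hstep

/-- The `k` consecutive vertices of rail `a` that start in column `x` and proceed in direction
`d`; used for the part of the trail alongside or behind the walker. -/
def railSegment (d : ℤˣ) (a : Bool) : ℤ → ℕ → Set (ℤ × Bool)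
  | _, 0 => ∅
  | x, k + 1 => insert (x, a) (railSegment d a (x + d) k)

theorem railSegment_subset_insert {k : ℕ} (h : railSegment (-d) a (x - d) k ⊆ S) :
    railSegment (-d) a (x + d - d) (k + 1) ⊆ insert (x, a) S := by
  rw [add_sub_cancel_right]
  exact Set.insert_subset_insert h

theorem sawCountAvoiding_le_one_of_deadEnd {g : ℕ} (hbehind : (x - (d : ℤ), a) ∈ S)
    (hopposite : railSegment d (!a) x g ⊆ S) (hend : (x + (d : ℤ) * g, a) ∈ S) (n : ℕ) :
    sawCountAvoiding ladder S (x, a) n ≤ 1 := by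
  induction n generalizing S x g with
  | zero => exact sawCountAvoiding_zero_le_one
  | succ n ih =>
    cases g with
    | zero => simp [sawCountAvoiding_of_mem (by simpa using hend : (x, a) ∈ S)]
    | succ g =>
      obtain ⟨hcross, hopposite⟩ := Set.insert_subset_iff.1 hopposite
      refine (sawCountAvoiding_succ_le_of_forced hbehind hcross n).trans
        (ih (g := g) (by simp) (hopposite.trans (Set.subset_insert _ _)) (.inr ?_))
      convert hend using 2
      push_cast
      ring

theorem sawCountAvoiding_lt_fib_of_pocket {g : ℕ} (hbehind : (x - (d : ℤ), a) ∈ S)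
    (htrail : railSegment (-d) a (x - d) g ⊆ S)
    (hclosed : (x - (d : ℤ) * (g + 1), !a) ∈ S) (n : ℕ) :
    sawCountAvoiding ladder S (x, a) n < Nat.fib (n + 3) := by
  induction n using Nat.twoStepInduction generalizing S x a g with
  | zero => exact Nat.lt_succ_of_le sawCountAvoiding_zero_le_one
  | one => exact Nat.lt_succ_of_le (sawCountAvoiding_one_le_two hbehind)
  | more n ih₀ ih₁ =>
    have hforward :
        sawCountAvoiding ladder (insert (x, a) S) (x + d, a) (n + 1) < Nat.fib (n + 4) := by
      refine ih₁ (g := g + 1) (by simp) (railSegment_subset_insert htrail) (.inr ?_)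
      convert hclosed using 2
      push_cast
      ring
    have hcross : sawCountAvoiding ladder (insert (x, !a) (insert (x, a) S)) (x + d, !a) n <
        Nat.fib (n + 3) :=
      ih₀ (g := 0) (by simp) (Set.empty_subset _) (by simp)
    have hreturn :
        sawCountAvoiding ladder (insert (x, !a) (insert (x, a) S)) (x - d, !a) n ≤ 1 := by
      refine sawCountAvoiding_le_one_of_deadEnd (d := -d) (g := g) (by simp) ?_ (.inr (.inr ?_)) n
      · rw [Bool.not_not]
        exact htrail.trans ((Set.subset_insert _ _).trans (Set.subset_insert _ _))
      · convert hclosed using 2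
        push_cast
        ring
    have hsplit := sawCountAvoiding_add_two_le d S x a n
    rw [sawCountAvoiding_of_mem (v := (x - (d : ℤ), a)) (by simp [hbehind])] at hsplit
    have hfib : Nat.fib (n + 2 + 3) = Nat.fib (n + 3) + Nat.fib (n + 4) := Nat.fib_add_two
    omega

theorem sawCountAvoiding_lt_fib_of_column (hbehind : (x, a) ∈ S) (hopposite : (x, !a) ∈ S) (n : ℕ) :
    sawCountAvoiding ladder S (x + d, a) n < Nat.fib (n + 3) :=
  sawCountAvoiding_lt_fib_of_pocket (d := d) (g := 0) (by simpa) (Set.empty_subset _) (by simpa) n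

theorem sawCountAvoiding_lt_fib_of_corridor {g : ℕ} (hbehind : (x - (d : ℤ), a) ∈ S)
    (hopposite : railSegment d (!a) x (g + 1) ⊆ S) (n : ℕ) :
    sawCountAvoiding ladder S (x, a) n < Nat.fib (n + 3) := by
  induction n generalizing S x g with
  | zero => exact Nat.lt_succ_of_le sawCountAvoiding_zero_le_one
  | succ n ih =>
    obtain ⟨hcross, hopposite⟩ := Set.insert_subset_iff.1 hopposite
    refine (sawCountAvoiding_succ_le_of_forced hbehind hcross n).trans_lt
      (lt_of_lt_of_le ?_ (Nat.fib_mono (n + 3).le_succ))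
    cases g with
    | zero => exact sawCountAvoiding_lt_fib_of_column (by simp) (by simp [hcross]) n
    | succ g => exact ih (by simp) (hopposite.trans (Set.subset_insert _ _))

theorem sawCountAvoiding_le_two_mul_fib_of_trail {g : ℕ}
    (htrail : railSegment (-d) a (x - d) (g + 1) ⊆ S) (n : ℕ) :
    sawCountAvoiding ladder S (x, a) n ≤ 2 * Nat.fib (n + 3) := by
  induction n using Nat.twoStepInduction generalizing S x g with
  | zero => exact sawCountAvoiding_zero_le_one.trans (by decide)
  | one => exact (sawCountAvoiding_one_le_two (htrail (.inl rfl))).trans (by decide)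
  | more n _ ih =>
    have hforward := ih (railSegment_subset_insert htrail)
    have hcross : sawCountAvoiding ladder (insert (x, !a) (insert (x, a) S)) (x + d, !a) n <
        Nat.fib (n + 3) :=
      sawCountAvoiding_lt_fib_of_column (by simp) (by simp) n
    have hreturn : sawCountAvoiding ladder (insert (x, !a) (insert (x, a) S)) (x - d, !a) n <
        Nat.fib (n + 3) := by
      refine sawCountAvoiding_lt_fib_of_corridor (d := -d) (g := g) (by simp) ?_ n
      rw [Bool.not_not]
      exact htrail.trans ((Set.subset_insert _ _).trans (Set.subset_insert _ _))
    have hsplit := sawCountAvoiding_add_two_le d S x a n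
    rw [sawCountAvoiding_of_mem (v := (x - (d : ℤ), a)) (.inr (htrail (.inl rfl)))] at hsplit
    have hfib : Nat.fib (n + 2 + 3) = Nat.fib (n + 3) + Nat.fib (n + 1 + 3) := Nat.fib_add_two
    omega

theorem sawCountAvoiding_le_four_mul_fib (S : Set (ℤ × Bool)) (v : ℤ × Bool) (n : ℕ) :
    sawCountAvoiding ladder S v n ≤ 4 * Nat.fib (n + 3) := by
  obtain ⟨x, a⟩ := v
  have hrail (d : ℤˣ) (m : ℕ) :
      sawCountAvoiding ladder (insert (x, a) S) (x + d, a) m ≤ 2 * Nat.fib (m + 3) :=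
    sawCountAvoiding_le_two_mul_fib_of_trail (d := d) (g := 0) (by simp [railSegment]) m
  have hcross (d : ℤˣ) (m : ℕ) :
      sawCountAvoiding ladder (insert (x, !a) (insert (x, a) S)) (x + d, !a) m < Nat.fib (m + 3) :=
    sawCountAvoiding_lt_fib_of_column (by simp) (by simp) m
  match n with
  | 0 => exact sawCountAvoiding_zero_le_one.trans (by decide)
  | 1 =>
    calc
      sawCountAvoiding ladder S (x, a) 1
      _ ≤ 1 + 1 + 1 := (sawCountAvoiding_succ_le 1 S x a 0).trans <| by
          gcongr <;> exact sawCountAvoiding_zero_le_one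
      _ ≤ 4 * Nat.fib 4 := by decide
  | n + 2 =>
    have hfib : Nat.fib (n + 2 + 3) = Nat.fib (n + 3) + Nat.fib (n + 1 + 3) := Nat.fib_add_two
    calc
      sawCountAvoiding ladder S (x, a) (n + 2)
      _ ≤ 2 * Nat.fib (n + 1 + 3) + 2 * Nat.fib (n + 1 + 3) +
          (Nat.fib (n + 3) + Nat.fib (n + 3)) :=
        (sawCountAvoiding_add_two_le 1 S x a n).trans <| by
          gcongr
          exacts [hrail 1 _, hrail (-1) _, (hcross 1 n).le, (hcross (-1) n).le]
      _ ≤ 4 * Nat.fib (n + 2 + 3) := by omega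

end UpperBound

theorem fib_succ_le_sawCountAvoiding {S : Set (ℤ × Bool)} {x : ℤ} (hS : ∀ v ∈ S, v.1 < x)
    (a : Bool) (n : ℕ) : Nat.fib (n + 1) ≤ sawCountAvoiding ladder S (x, a) n := by
  induction n using Nat.twoStepInduction generalizing S x a with
  | zero => exact (sawCountAvoiding_zero fun h ↦ (hS _ h).false).ge
  | one =>
    calc
      Nat.fib 2
      _ = sawCountAvoiding ladder (insert (x, a) S) (x + 1, a) 0 :=
        (sawCountAvoiding_zero (by grind)).symm
      _ ≤ sawCountAvoiding ladder S (x, a) 1 := by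
        rw [sawCountAvoiding_succ 1 fun h ↦ (hS _ h).false, Units.val_one]
        omega
  | more n ih₀ ih₁ =>
    calc
      Nat.fib (n + 3)
      _ = Nat.fib (n + 1) + Nat.fib (n + 2) := Nat.fib_add_two
      _ ≤ sawCountAvoiding ladder (insert (x, !a) (insert (x, a) S)) (x + 1, !a) n +
          sawCountAvoiding ladder (insert (x, a) S) (x + 1, a) (n + 1) :=
        Nat.add_le_add (ih₀ (by grind) (!a)) (ih₁ (by grind) a)
      _ ≤ sawCountAvoiding ladder S (x, a) (n + 2) := by
        have hopposite : (x, !a) ∉ insert (x, a) S := by grind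
        rw [sawCountAvoiding_succ 1 fun h ↦ (hS _ h).false, sawCountAvoiding_succ 1 hopposite,
          Units.val_one]
        omega

end ladder

theorem goldenRatio_pow_le_mul_fib_succ (n : ℕ) :
    Real.goldenRatio ^ n ≤ Real.goldenRatio * Nat.fib (n + 1) := by
  calc
    Real.goldenRatio ^ n
    _ = Nat.fib (n + 1) + -Real.goldenConj * Nat.fib n := by
      rw [← Real.fib_succ_sub_goldenConj_mul_fib]
      ring
    _ ≤ Nat.fib (n + 1) + -Real.goldenConj * Nat.fib (n + 1) := by
      have := Real.goldenConj_neg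
      gcongr
      · linarith
      · exact n.le_succ
    _ = Real.goldenRatio * Nat.fib (n + 1) := by
      rw [← Real.one_sub_goldenConj]
      ring

theorem fib_succ_le_goldenRatio_pow (n : ℕ) : (Nat.fib (n + 1) : ℝ) ≤ Real.goldenRatio ^ n := by
  rw [← Real.fib_succ_sub_goldenConj_mul_fib]
  have := mul_nonpos_of_nonpos_of_nonneg Real.goldenConj_neg.le (Nat.fib n).cast_nonneg
  linarith

theorem tendsto_const_mul_pow_rpow_one_div {c r : ℝ} (hc : 0 < c) (hr : 0 ≤ r) :
    Tendsto (fun n : ℕ ↦ (c * r ^ n) ^ ((1 : ℝ) / n)) atTop (nhds r) := by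
  have hconst : Tendsto (fun n : ℕ ↦ c ^ ((1 : ℝ) / n)) atTop (nhds 1) := by
    simpa [Function.comp_def] using (Real.continuousAt_const_rpow hc.ne').tendsto.comp
      (tendsto_one_div_atTop_nhds_zero_nat (𝕜 := ℝ))
  refine (by simpa using hconst.mul_const r : Tendsto _ atTop (nhds r)).congr' ?_
  filter_upwards [eventually_ne_atTop 0] with n hn
  rw [Real.mul_rpow hc.le (pow_nonneg hr n), one_div, Real.pow_rpow_inv_natCast hr hn]

theorem tendsto_rpow_one_div_of_mul_pow_le_of_le_mul_pow {f : ℕ → ℝ} {c C r : ℝ} (hc : 0 < c)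
    (hC : 0 < C) (hr : 0 ≤ r) (hlower : ∀ᶠ n in atTop, c * r ^ n ≤ f n)
    (hupper : ∀ᶠ n in atTop, f n ≤ C * r ^ n) :
    Tendsto (fun n : ℕ ↦ f n ^ ((1 : ℝ) / n)) atTop (nhds r) := by
  refine tendsto_of_tendsto_of_tendsto_of_le_of_le' (tendsto_const_mul_pow_rpow_one_div hc hr)
    (tendsto_const_mul_pow_rpow_one_div hC hr) ?_ ?_
  · filter_upwards [hlower] with n hn
    gcongr
  · filter_upwards [hlower, hupper] with n hn hn'
    have : 0 ≤ f n := le_trans (by positivity) hn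
    gcongr

/-- The connective constant of the ladder graph is the golden mean `(1 + √5)/2`. -/
theorem ladder_connective_constant :
    ∀ v : ℤ × Bool,
      Tendsto (fun n : ℕ => (sawCount ladder v n : ℝ) ^ ((1 : ℝ) / n)) atTop
        (nhds ((1 + Real.sqrt 5) / 2)) := by
  intro v
  have hlower (n : ℕ) : Nat.fib (n + 1) ≤ sawCount ladder v n := by
    rw [← sawCountAvoiding_empty]
    exact ladder.fib_succ_le_sawCountAvoiding (by simp) v.2 n
  have hupper (n : ℕ) : sawCount ladder v n ≤ 4 * Nat.fib (n + 3) := by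
    rw [← sawCountAvoiding_empty]
    exact ladder.sawCountAvoiding_le_four_mul_fib ∅ v n
  refine tendsto_rpow_one_div_of_mul_pow_le_of_le_mul_pow (C := 4 * Real.goldenRatio ^ 2)
    (inv_pos.2 Real.goldenRatio_pos) (by positivity) Real.goldenRatio_pos.le
    (.of_forall fun n ↦ ?_) (.of_forall fun n ↦ ?_)
  · rw [inv_mul_le_iff₀ Real.goldenRatio_pos]
    exact (goldenRatio_pow_le_mul_fib_succ n).trans (by gcongr; exact hlower n)
  · calc
      (sawCount ladder v n : ℝ)
      _ ≤ 4 * Nat.fib (n + 3) := mod_cast hupper n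
      _ ≤ 4 * Real.goldenRatio ^ (n + 2) := by gcongr; exact fib_succ_le_goldenRatio_pow (n + 2)
      _ = 4 * Real.goldenRatio ^ 2 * Real.goldenRatio ^ n := by ring
end
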